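/- Let Γ be a connected simple graph on [n] with n ≥ 3. Then the dimension of Splines(Γ)^1 as a ℂ-vector space equals D_Γ := 2n − 1 − Σ_{j cut vertex of Γ} c(j) + n·(|LB_Γ| + |{B ∈ IB_Γ : |B| > 2}| − 1) + Σ_{s internal cut edge of Γ} C(n, |V(G_s)|), where C(n,m) denotes the binomial coefficient. -/

import Mathlib

open MvPolynomial

/-- A spline on a simple graph `Γ` on `[n]`. -/
def IsSpline {n : ℕ} (Γ : SimpleGraph (Fin n))
    (ρ : Equiv.Perm (Fin n) → MvPolynomial (Fin n) ℂ) : Prop :=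
  ∀ (w : Equiv.Perm (Fin n)) (i j : Fin n), Γ.Adj i j →
    ρ w - ρ (w * Equiv.swap i j) ∈
      Ideal.span {(X (w i) - X (w j) : MvPolynomial (Fin n) ℂ)}

/-- The `ℂ`-vector space `Splines(Γ)¹` of splines all of whose values are homogeneous of
degree `1` (or zero). -/
noncomputable def linSplines {n : ℕ} (Γ : SimpleGraph (Fin n)) :
    Submodule ℂ (Equiv.Perm (Fin n) → MvPolynomial (Fin n) ℂ) where
  carrier := {ρ | IsSpline Γ ρ ∧ ∀ w, (ρ w).IsHomogeneous 1}
  zero_mem' := by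
    refine ⟨fun w i j h => ?_, fun w => ?_⟩
    · simp
    · simpa using MvPolynomial.isHomogeneous_zero (Fin n) ℂ 1
  add_mem' := by
    rintro a b ⟨ha1, ha2⟩ ⟨hb1, hb2⟩
    refine ⟨fun w i j h => ?_, fun w => (ha2 w).add (hb2 w)⟩
    have h := Ideal.add_mem _ (ha1 w i j h) (hb1 w i j h)
    simpa [add_sub_add_comm] using h
  smul_mem' := by
    rintro c ρ ⟨h1, h2⟩
    constructor
    · intro w i j h
      have hmem := h1 w i j h
      have h3 : (c • ρ) w - (c • ρ) (w * Equiv.swap i j)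
          = C c * (ρ w - ρ (w * Equiv.swap i j)) := by
        simp [MvPolynomial.smul_eq_C_mul, mul_sub]
      rw [h3]
      exact Ideal.mul_mem_left _ _ hmem
    · intro w
      have h4 : (c • ρ) w = C c * ρ w := by
        simp [MvPolynomial.smul_eq_C_mul]
      rw [h4]
      simpa using (MvPolynomial.isHomogeneous_C (Fin n) c).mul (h2 w)

/-- `j` is a cut vertex of `Γ`: the induced subgraph `Γ − j` is disconnected. -/
def IsCutVtx {n : ℕ} (Γ : SimpleGraph (Fin n)) (j : Fin n) : Prop :=
  ¬ (Γ.induce ({j}ᶜ : Set (Fin n))).Connected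

/-- `{i,j}` is a cut edge of `Γ`: deleting it disconnects the graph. -/
def IsCutEdge {n : ℕ} (Γ : SimpleGraph (Fin n)) (i j : Fin n) : Prop :=
  Γ.Adj i j ∧ ¬ (Γ.deleteEdges {s(i, j)}).Connected

/-- The graph obtained from `Γ` by deleting all edges incident to the vertex `j`. -/
def delVertexEdges {n : ℕ} (Γ : SimpleGraph (Fin n)) (j : Fin n) : SimpleGraph (Fin n) :=
  Γ.deleteEdges {e : Sym2 (Fin n) | j ∈ e}

/-- The number of connected components of `Γ − j` (components of the vertex-deleted graph,
i.e. reachability classes of vertices other than `j` after removing all edges at `j`). -/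
noncomputable def numComp {n : ℕ} (Γ : SimpleGraph (Fin n)) (j : Fin n) : ℕ :=
  {G : Set (Fin n) | ∃ v₀ : Fin n, v₀ ≠ j ∧
      G = {y | (delVertexEdges Γ j).Reachable v₀ y}}.ncard

/-- `B` is a biconnected vertex set: `|B| ≥ 2`, the induced subgraph on `B` is connected,
and it has no cut vertex. -/
def IsBiconn {n : ℕ} (Γ : SimpleGraph (Fin n)) (B : Set (Fin n)) : Prop :=
  2 ≤ B.ncard ∧ (Γ.induce B).Connected ∧
    ∀ b ∈ B, (Γ.induce (B \ {b})).Connected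

/-- `B` is a block of `Γ`: a maximal biconnected vertex set. -/
def IsBlock {n : ℕ} (Γ : SimpleGraph (Fin n)) (B : Set (Fin n)) : Prop :=
  IsBiconn Γ B ∧ ∀ B' : Set (Fin n), IsBiconn Γ B' → B ⊆ B' → B' = B

open Classical in
/-- The leaf blocks of `Γ`: blocks containing exactly one cut vertex (if `Γ` has no cut
vertex, there are none). -/
noncomputable def LeafBlocks {n : ℕ} (Γ : SimpleGraph (Fin n)) : Set (Set (Fin n)) :=
  if ∃ j, IsCutVtx Γ j then
    {B | IsBlock Γ B ∧ ({j ∈ B | IsCutVtx Γ j} : Set (Fin n)).ncard = 1}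
  else ∅

open Classical in
/-- The internal blocks of `Γ`: blocks containing at least two cut vertices (if `Γ` has no
cut vertex, the whole vertex set is the unique internal block). -/
noncomputable def InternalBlocks {n : ℕ} (Γ : SimpleGraph (Fin n)) : Set (Set (Fin n)) :=
  if ∃ j, IsCutVtx Γ j then
    {B | IsBlock Γ B ∧ 2 ≤ ({j ∈ B | IsCutVtx Γ j} : Set (Fin n)).ncard}
  else {Set.univ}

open Classical in
/-- The combinatorial invariant
`D_Γ = 2n − 1 − Σ_{j cut vertex} c(j) + n·(|LB_Γ| + |{B ∈ IB_Γ : |B| > 2}| − 1)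
      + Σ_{s internal cut edge} C(n, |V(G_s)|)`,
where `c(j) + 1` is the number of components of `Γ − j`, and for an internal cut edge
`s = {i,j}` (`i < j`), `G_s` is the component of the edge-deleted graph containing `i`. -/
noncomputable def Dinv {n : ℕ} (Γ : SimpleGraph (Fin n)) : ℤ :=
  2 * (n : ℤ) - 1
    - ∑ j ∈ Finset.univ.filter (fun j : Fin n => IsCutVtx Γ j), ((numComp Γ j : ℤ) - 1)
    + (n : ℤ) * (((LeafBlocks Γ).ncard : ℤ)
        + (({B ∈ InternalBlocks Γ | 2 < B.ncard} : Set (Set (Fin n))).ncard : ℤ) - 1)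
    + ∑ p ∈ Finset.univ.filter (fun p : Fin n × Fin n =>
        p.1 < p.2 ∧ IsCutEdge Γ p.1 p.2 ∧ IsCutVtx Γ p.1 ∧ IsCutVtx Γ p.2),
        ((n.choose ({y | (Γ.deleteEdges {s(p.1, p.2)}).Reachable p.1 y} :
            Set (Fin n)).ncard : ℤ))

/-!
The value of a linear spline at `w` is `∑ p, b p w • t_{w(p)}`, and the spline condition says that
right multiplication by an edge `(i j)` fixes `b p` for `p ≠ i, j` and fixes `b i + b j`. Hence the
spline is determined, up to constant `b p`, by the jumps `b i w - b i (w (i j))` across the edges.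

The jump across a cut edge is a 1-cocycle on the Johnson graph of the `w`-images of one side of
the edge; the jump across an edge of a block with more than two vertices is a 1-cocycle on the
complete graph of the vertices `w(i)`. The triangles of a Johnson graph generate its cycles, so
these cocycles are coboundaries: a cut edge contributes one function on `m`-subsets of `[n]` and a
larger block one function on `[n]`, each modulo constants. All such potentials occur,
independently over the blocks, so the dimension is `n + ∑ (C(n,|V(G_s)|) - 1) + ∑ (n - 1)`, and
counting blocks through the components left by deleting a vertex turns this into `D_Γ`.
-/

namespace LinSpline

open Equiv Finset

/-! ### Functions on a group and their right periods -/

section RightPeriods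

variable {G A : Type*} [Group G]

/-- The subgroup of right periods of a function on a group: those `σ` with `F (w * σ) = F w` for
all `w`. -/
def rightPeriods {β : Type*} (F : G → β) : Subgroup G where
  carrier := {σ | ∀ w, F (w * σ) = F w}
  one_mem' w := by rw [mul_one]
  mul_mem' {σ τ} hσ hτ w := by rw [← mul_assoc, hτ, hσ]
  inv_mem' {σ} hσ w := by rw [← hσ (w * σ⁻¹), inv_mul_cancel_right]

lemma mem_rightPeriods {β : Type*} {F : G → β} {σ : G} :
    σ ∈ rightPeriods F ↔ ∀ w, F (w * σ) = F w := Iff.rfl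

variable [AddCommGroup A] {F : G → A} {s τ : G}

/-- The right difference `w ↦ F w - F (w * s)`; for `s` an edge transposition this is the jump of
a coefficient function of a spline across the edge. -/
def rightDiff (s : G) (F : G → A) (w : G) : A := F w - F (w * s)

lemma rightDiff_add (s : G) (F F' : G → A) :
    rightDiff s (F + F') = rightDiff s F + rightDiff s F' := by
  funext w
  simp only [rightDiff, Pi.add_apply]
  abel

lemma rightDiff_zero (s : G) : rightDiff s (0 : G → A) = 0 := _root_.funext fun _ => sub_self 0

lemma rightDiff_eq_zero_iff : rightDiff s F = 0 ↔ s ∈ rightPeriods F := by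
  simp only [funext_iff, rightDiff, Pi.zero_apply, sub_eq_zero, mem_rightPeriods, eq_comm]

lemma rightDiff_mul_self (hs : s * s = 1) (F : G → A) (w : G) :
    rightDiff s F (w * s) = -rightDiff s F w := by
  rw [rightDiff, rightDiff, mul_assoc, hs, mul_one, neg_sub]

lemma mem_rightPeriods_rightDiff (hτ : τ ∈ rightPeriods F) (hc : Commute τ s) :
    τ ∈ rightPeriods (rightDiff s F) := by
  intro w
  rw [rightDiff, rightDiff, hτ, mul_assoc, hc.eq, ← mul_assoc, hτ]

/-- The braid relation turns a period `τ` of `F` into a three-term relation for its difference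
along `s`. -/
lemma rightDiff_triangle (hτ : τ ∈ rightPeriods F) (hbraid : s * τ * s = τ * s * τ) (w : G) :
    rightDiff s F w + rightDiff s F (w * s * τ) = rightDiff s F (w * τ) := by
  have hlast : F (w * s * τ * s) = F (w * τ * s) := by
    rw [mul_assoc, mul_assoc w, ← mul_assoc s, hbraid, ← mul_assoc, hτ, ← mul_assoc]
  simp only [rightDiff, hτ w, hτ (w * s), hlast]
  abel

lemma triangle_conj {D : G → A} {ρ : G} (hρ : ρ ∈ rightPeriods D) (hc : Commute ρ s)
    (h : ∀ w, D w + D (w * s * τ) = D (w * τ)) (w : G) :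
    D w + D (w * s * (ρ * τ * ρ⁻¹)) = D (w * (ρ * τ * ρ⁻¹)) := by
  have hρ' : ρ⁻¹ ∈ rightPeriods D := inv_mem hρ
  have key := h (w * ρ)
  rw [hρ, mul_assoc w, hc.eq] at key
  simpa only [← mul_assoc, hρ' _] using key

end RightPeriods

section Swaps

variable {α : Type*} [DecidableEq α]

lemma mem_of_forall_swap_mem [Finite α] {H : Subgroup (Perm α)} {σ : Perm α}
    (h : ∀ x, swap x (σ x) ∈ H) : σ ∈ H := by
  let S : Set (Perm α) := {τ | τ ∈ H ∧ τ.IsSwap}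
  suffices σ ∈ Subgroup.closure S from (Subgroup.closure_le H).2 (fun τ hτ => hτ.1) this
  refine (mem_closure_isSwap fun τ hτ => hτ.2).2 ⟨Set.toFinite _, fun x => ?_⟩
  rcases eq_or_ne x (σ x) with hx | hx
  · rw [← hx]
    exact MulAction.mem_orbit_self x
  · exact ⟨⟨swap x (σ x), Subgroup.subset_closure ⟨h x, x, σ x, hx, rfl⟩⟩, swap_apply_left _ _⟩

lemma swap_mem_of_reachable {H : Subgroup (Perm α)} {Γ : SimpleGraph α}
    (h : ∀ u v, Γ.Adj u v → swap u v ∈ H) {u v : α} (huv : Γ.Reachable u v) : swap u v ∈ H := by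
  obtain ⟨p⟩ := huv
  induction p with
  | nil => rw [swap_self]; exact one_mem H
  | cons ha _ ih => exact SubmonoidClass.swap_mem_trans H (h _ _ ha) ih

lemma apply_eq_apply_of_connected [Finite α] {β : Type*} {F : Perm α → β} {Γ : SimpleGraph α}
    (hΓ : Γ.Connected) (h : ∀ u v, Γ.Adj u v → swap u v ∈ rightPeriods F) (w w' : Perm α) :
    F w = F w' := by
  have hmem : w'⁻¹ * w ∈ rightPeriods F :=
    mem_of_forall_swap_mem fun x => swap_mem_of_reachable h (hΓ.preconnected x _)
  rw [← hmem w', mul_inv_cancel_left]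

lemma commute_swap_swap {i j y z : α} (hyi : y ≠ i) (hyj : y ≠ j) (hzi : z ≠ i) (hzj : z ≠ j) :
    Commute (swap y z) (swap i j) := by
  rw [commute_iff_eq, mul_swap_eq_swap_mul, swap_apply_of_ne_of_ne hyi.symm hzi.symm,
    swap_apply_of_ne_of_ne hyj.symm hzj.symm]

lemma swap_braid {i j u : α} (hij : i ≠ j) (hui : u ≠ i) (huj : u ≠ j) :
    swap i j * swap i u * swap i j = swap i u * swap i j * swap i u := by
  rw [swap_comm i u, swap_mul_swap_mul_swap hui huj, swap_comm u i, swap_comm i j,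
    swap_mul_swap_mul_swap hij.symm huj.symm, swap_comm]

end Swaps

/-! ### Linear forms and coefficient families -/

section LinearForm

variable {σ R : Type*} [Fintype σ] [CommRing R]

/-- The linear form `∑ k, c k • t_k` with prescribed coefficients. -/
noncomputable def linearForm : (σ → R) →ₗ[R] MvPolynomial σ R :=
  Fintype.linearCombination R X

lemma eval_linearForm (c v : σ → R) : eval v (linearForm c) = ∑ k, c k * v k := by
  simp [linearForm, Fintype.linearCombination_apply, smul_eq_C_mul]

lemma exists_linearForm_eq_iff {q : MvPolynomial σ R} :
    (∃ c, linearForm c = q) ↔ q.IsHomogeneous 1 := by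
  rw [← mem_homogeneousSubmodule, homogeneousSubmodule_one_eq_span_X,
    ← Fintype.range_linearCombination]
  rfl

lemma linearForm_injective :
    Function.Injective (linearForm : (σ → R) →ₗ[R] MvPolynomial σ R) := by
  classical
  intro c d h
  funext k
  simpa [eval_linearForm, Pi.single_apply] using congrArg (eval (Pi.single k 1)) h

lemma linearForm_mem_span_X_sub_X_iff {c : σ → R} {a b : σ} (hab : a ≠ b) :
    linearForm c ∈ Ideal.span {(X a - X b : MvPolynomial σ R)} ↔
      (∀ k, k ≠ a → k ≠ b → c k = 0) ∧ c a + c b = 0 := by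
  classical
  rw [Ideal.mem_span_singleton]
  constructor
  · rintro ⟨q, hq⟩
    refine ⟨fun k hka hkb => ?_, ?_⟩
    · simpa [eval_linearForm, Pi.single_apply, hka.symm, hkb.symm] using
        congrArg (eval (Pi.single k 1)) hq
    · have heval := congrArg (eval (Pi.single a 1 + Pi.single b 1 : σ → R)) hq
      simp only [eval_linearForm, Pi.add_apply, mul_add, sum_add_distrib, eval_mul, eval_sub,
        eval_X, Pi.single_apply] at heval
      simpa [hab, hab.symm] using heval
  · rintro ⟨hzero, hsum⟩
    have hform : linearForm c = c a • X a + c b • X b := by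
      rw [linearForm, Fintype.linearCombination_apply,
        ← sum_pair (f := fun k => c k • (X k : MvPolynomial σ R)) hab]
      refine (sum_subset (subset_univ _) fun k _ hk => ?_).symm
      simp only [mem_insert, mem_singleton, not_or] at hk
      rw [hzero k hk.1 hk.2, zero_smul]
    refine ⟨C (c a), ?_⟩
    rw [hform, eq_neg_of_add_eq_zero_right hsum, smul_eq_C_mul, smul_eq_C_mul, map_neg]
    ring

end LinearForm

section CoeffSpace

variable {α : Type*} (R : Type*) [CommRing R]

/-- The function `w ↦ ∑ p, b p w • t_{w(p)}` with a given coefficient family `b`. -/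
noncomputable def ofCoeff [Fintype α] :
    (α → Perm α → R) →ₗ[R] (Perm α → MvPolynomial α R) :=
  LinearMap.pi fun w =>
    linearForm ∘ₗ LinearMap.pi fun k => LinearMap.proj w ∘ₗ LinearMap.proj (w⁻¹ k)

variable {R} in
lemma ofCoeff_apply [Fintype α] (b : α → Perm α → R) (w : Perm α) :
    ofCoeff R b w = linearForm fun k => b (w⁻¹ k) w := rfl

variable {R} in
lemma ofCoeff_injective [Fintype α] :
    Function.Injective (ofCoeff R : (α → Perm α → R) →ₗ[R] (Perm α → MvPolynomial α R)) := by
  intro b b' h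
  funext p w
  simpa using congrFun (linearForm_injective (congrFun h w)) (w p)

variable [DecidableEq α]

/-- The coefficient families of linear splines: `b p w` is the coefficient of `t_{w(p)}` in the
value at `w`. -/
def coeffSpace (Γ : SimpleGraph α) : Submodule R (α → Perm α → R) where
  carrier := {b | ∀ i j, Γ.Adj i j →
    (∀ p, p ≠ i → p ≠ j → swap i j ∈ rightPeriods (b p)) ∧ swap i j ∈ rightPeriods (b i + b j)}
  zero_mem' _ _ _ := ⟨fun _ _ _ _ => rfl, fun _ => rfl⟩
  add_mem' {a b} ha hb i j hij := by
    refine ⟨fun p hpi hpj w => ?_, fun w => ?_⟩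
    · simp only [Pi.add_apply, (ha i j hij).1 p hpi hpj w, (hb i j hij).1 p hpi hpj w]
    · have hab := congrArg₂ (· + ·) ((ha i j hij).2 w) ((hb i j hij).2 w)
      simp only [Pi.add_apply] at hab ⊢
      rw [add_add_add_comm, hab, add_add_add_comm]
  smul_mem' c b hb i j hij := by
    refine ⟨fun p hpi hpj w => ?_, fun w => ?_⟩
    · simp only [Pi.smul_apply, (hb i j hij).1 p hpi hpj w]
    · simp only [Pi.smul_apply, Pi.add_apply, ← smul_add]
      exact congrArg (c • ·) ((hb i j hij).2 w)

variable [Fintype α] {R}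

lemma ofCoeff_sub_mem_span_iff (b : α → Perm α → R) {i j : α} (hij : i ≠ j) (w : Perm α) :
    ofCoeff R b w - ofCoeff R b (w * swap i j) ∈
        Ideal.span {(X (w i) - X (w j) : MvPolynomial α R)} ↔
      (∀ p, p ≠ i → p ≠ j → b p (w * swap i j) = b p w) ∧
        (b i + b j) (w * swap i j) = (b i + b j) w := by
  rw [ofCoeff_apply, ofCoeff_apply, ← map_sub,
    linearForm_mem_span_X_sub_X_iff (w.injective.ne hij)]
  refine and_congr ⟨fun h p hpi hpj => ?_, fun h k hki hkj => ?_⟩ ?_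
  · have hp := h (w p) (w.injective.ne hpi) (w.injective.ne hpj)
    simpa [swap_apply_of_ne_of_ne hpi hpj, sub_eq_zero, eq_comm] using hp
  · obtain ⟨p, rfl⟩ := w.surjective k
    have hpi : p ≠ i := fun h => hki (h ▸ rfl)
    have hpj : p ≠ j := fun h => hkj (h ▸ rfl)
    simp [swap_apply_of_ne_of_ne hpi hpj, h p hpi hpj]
  · simp [sub_add_sub_comm, sub_eq_zero, add_comm (b j _), eq_comm]

end CoeffSpace

section LinSplines

variable {n : ℕ} (Γ : SimpleGraph (Fin n))

lemma isSpline_ofCoeff_iff (b : Fin n → Perm (Fin n) → ℂ) :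
    IsSpline Γ (ofCoeff ℂ b) ↔ b ∈ coeffSpace ℂ Γ := by
  have hedge := fun w i j (hij : Γ.Adj i j) => ofCoeff_sub_mem_span_iff b hij.ne w
  exact ⟨fun h i j hij => ⟨fun p hpi hpj w => ((hedge w i j hij).1 (h w i j hij)).1 p hpi hpj,
      fun w => ((hedge w i j hij).1 (h w i j hij)).2⟩,
    fun hb w i j hij => (hedge w i j hij).2
      ⟨fun p hpi hpj => (hb i j hij).1 p hpi hpj w, (hb i j hij).2 w⟩⟩

lemma map_ofCoeff_coeffSpace : (coeffSpace ℂ Γ).map (ofCoeff ℂ) = linSplines Γ := by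
  ext ρ
  constructor
  · rintro ⟨b, hb, rfl⟩
    exact ⟨(isSpline_ofCoeff_iff Γ b).2 hb, fun w => exists_linearForm_eq_iff.1 ⟨_, rfl⟩⟩
  · rintro ⟨hρ, hdeg⟩
    choose c hc using fun w => exists_linearForm_eq_iff.2 (hdeg w)
    have hρc : ofCoeff ℂ (fun p w => c w (w p)) = ρ := by
      funext w
      simpa [ofCoeff_apply] using hc w
    exact ⟨_, (isSpline_ofCoeff_iff Γ _).1 (hρc ▸ hρ), hρc⟩

lemma finrank_linSplines :
    Module.finrank ℂ (linSplines Γ) = Module.finrank ℂ (coeffSpace ℂ Γ) := by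
  rw [← map_ofCoeff_coeffSpace]
  exact (Submodule.equivMapOfInjective _ ofCoeff_injective _).finrank_eq.symm

end LinSplines

/-! ### Blocks as inseparability classes -/

section Blocks

variable {n : ℕ} {Γ : SimpleGraph (Fin n)} {B B' : Set (Fin n)} {p q u v : Fin n}

lemma delVertexEdges_adj : (delVertexEdges Γ q).Adj u v ↔ Γ.Adj u v ∧ u ≠ q ∧ v ≠ q := by
  simp only [delVertexEdges, SimpleGraph.deleteEdges_adj, Set.mem_ofPred_eq, Sym2.mem_iff, not_or,
    ne_comm (b := q)]

/-- `u` and `v` are equal or joined by a walk of `Γ` avoiding `q`. -/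
abbrev ReachAvoid (Γ : SimpleGraph (Fin n)) (q u v : Fin n) : Prop :=
  (delVertexEdges Γ q).Reachable u v

namespace ReachAvoid

lemma refl (u : Fin n) : ReachAvoid Γ q u u := SimpleGraph.Reachable.refl u

lemma of_adj (h : Γ.Adj u v) (hu : u ≠ q) (hv : v ≠ q) : ReachAvoid Γ q u v :=
  (delVertexEdges_adj.2 ⟨h, hu, hv⟩).reachable

lemma ne (h : ReachAvoid Γ q u v) (hu : u ≠ q) : v ≠ q := by
  obtain ⟨W⟩ := h
  induction W with
  | nil => exact hu
  | cons ha _ ih => exact ih (delVertexEdges_adj.1 ha).2.2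

lemma of_induce {S : Set (Fin n)} (hq : q ∉ S) {a b : S} (h : (Γ.induce S).Reachable a b) :
    ReachAvoid Γ q a b :=
  h.map (G' := delVertexEdges Γ q) ⟨fun x => x.1, fun {x y} hxy =>
    delVertexEdges_adj.2 ⟨by simpa using hxy, fun h => hq (h ▸ x.2), fun h => hq (h ▸ y.2)⟩⟩

lemma exists_adj (hΓ : Γ.Connected) (hv : v ≠ p) : ∃ g, Γ.Adj p g ∧ ReachAvoid Γ p v g := by
  obtain ⟨W⟩ := hΓ.preconnected v p
  induction W with
  | nil => exact absurd rfl hv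
  | @cons a b c ha _ ih =>
    by_cases hbc : b = c
    · subst hbc
      exact ⟨a, ha.symm, .refl _⟩
    · obtain ⟨g, hg, hr⟩ := ih hbc
      exact ⟨g, hg, (of_adj ha hv hbc).trans hr⟩

lemma or_reachAvoid (hΓ : Γ.Connected) (hpq : p ≠ q) (u : Fin n) :
    ReachAvoid Γ p u q ∨ ReachAvoid Γ q u p := by
  obtain ⟨W⟩ := hΓ.preconnected u p
  induction W with
  | nil => exact Or.inr (.refl _)
  | @cons a b c ha _ ih =>
    by_cases hac : a = c
    · subst hac
      exact Or.inr (.refl _)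
    by_cases haq : a = q
    · subst haq
      exact Or.inl (.refl _)
    rcases ih hpq with h | h
    · exact Or.inl ((of_adj ha hac (ne h.symm hpq.symm)).trans h)
    · exact Or.inr ((of_adj ha haq (ne h.symm hpq)).trans h)

lemma induce_compl (h : ReachAvoid Γ q u v) (hu : u ≠ q) (hv : v ≠ q) :
    (Γ.induce ({q}ᶜ : Set (Fin n))).Reachable ⟨u, hu⟩ ⟨v, hv⟩ := by
  obtain ⟨W⟩ := h
  induction W with
  | nil => exact .refl _
  | @cons a b c hab _ ih =>
    have hb := (delVertexEdges_adj.1 hab).2.2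
    refine SimpleGraph.Reachable.trans (SimpleGraph.Adj.reachable ?_) (ih hb hv)
    simpa using (delVertexEdges_adj.1 hab).1

lemma reachable_deleteEdges (h : ReachAvoid Γ q u v) {e : Sym2 (Fin n)} (hq : q ∈ e) :
    (Γ.deleteEdges {e}).Reachable u v :=
  h.mono (SimpleGraph.deleteEdges_anti (Set.singleton_subset_iff.2 hq))

end ReachAvoid

/-- Inseparability: no third vertex separates `u` from `v`. -/
def Insep (Γ : SimpleGraph (Fin n)) (u v : Fin n) : Prop :=
  ∀ q, q ≠ u → q ≠ v → ReachAvoid Γ q u v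

namespace Insep

lemma symm (h : Insep Γ u v) : Insep Γ v u := fun q hv hu => (h q hu hv).symm

lemma refl (u : Fin n) : Insep Γ u u := fun _ _ _ => .refl _

lemma of_adj (h : Γ.Adj u v) : Insep Γ u v := fun _ hu hv => .of_adj h hu.symm hv.symm

end Insep

/-- `B` is a maximal set of pairwise inseparable vertices. In a connected graph with an edge these
are exactly the blocks, see `isBlock_iff_isInsepClass`. -/
structure IsInsepClass (Γ : SimpleGraph (Fin n)) (B : Set (Fin n)) : Prop where
  insep : ∀ u ∈ B, ∀ v ∈ B, Insep Γ u v
  mem_of_insep : ∀ z, (∀ u ∈ B, Insep Γ z u) → z ∈ B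

lemma exists_isInsepClass_superset {A : Set (Fin n)} (hA : ∀ u ∈ A, ∀ v ∈ A, Insep Γ u v) :
    ∃ B, IsInsepClass Γ B ∧ A ⊆ B := by
  obtain ⟨B, hAB, hB⟩ := Set.Finite.exists_le_maximal
    (s := {B : Set (Fin n) | ∀ u ∈ B, ∀ v ∈ B, Insep Γ u v}) (Set.toFinite _) hA
  refine ⟨B, ⟨hB.prop, fun z hz => ?_⟩, hAB⟩
  have hinsert : ∀ u ∈ insert z B, ∀ v ∈ insert z B, Insep Γ u v := by
    rintro u (rfl | hu) v (rfl | hv)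
    · exact Insep.refl _
    · exact hz v hv
    · exact (hz u hu).symm
    · exact hB.prop u hu v hv
  exact hB.le_of_ge hinsert (Set.subset_insert z B) (Set.mem_insert z B)

lemma exists_isInsepClass_of_adj (h : Γ.Adj p q) : ∃ B, IsInsepClass Γ B ∧ p ∈ B ∧ q ∈ B := by
  have hpair : ∀ u ∈ ({p, q} : Set (Fin n)), ∀ v ∈ ({p, q} : Set (Fin n)), Insep Γ u v := by
    rintro u (rfl | rfl) v (rfl | rfl)
    · exact Insep.refl _
    · exact Insep.of_adj h
    · exact (Insep.of_adj h).symm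
    · exact Insep.refl _
  obtain ⟨B, hB, hsub⟩ := exists_isInsepClass_superset hpair
  exact ⟨B, hB, hsub (by simp), hsub (by simp)⟩

/-- `u` lies in the branch of `B` at `p`: it is `p`, or `p` separates it from the rest of `B`. The
branches of a block at its vertices partition the vertex set. -/
def InBranch (Γ : SimpleGraph (Fin n)) (B : Set (Fin n)) (p u : Fin n) : Prop :=
  u = p ∨ ∀ v ∈ B, v ≠ p → ¬ ReachAvoid Γ p u v

lemma inBranch_self (Γ : SimpleGraph (Fin n)) (B : Set (Fin n)) (p : Fin n) : InBranch Γ B p p :=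
  Or.inl rfl

lemma not_inBranch_iff :
    ¬ InBranch Γ B p u ↔ u ≠ p ∧ ∃ v ∈ B, v ≠ p ∧ ReachAvoid Γ p u v := by
  simp only [InBranch, not_or, not_forall, not_not, exists_prop, ne_eq]

lemma inBranch_congr (h : ReachAvoid Γ p u v) (hu : u ≠ p) :
    InBranch Γ B p u ↔ InBranch Γ B p v := by
  simp only [InBranch, hu, h.ne hu, false_or]
  exact forall₃_congr fun x _ _ => not_congr ⟨h.symm.trans, h.trans⟩

lemma inBranch_iff_eq_of_mem (hu : u ∈ B) : InBranch Γ B p u ↔ u = p :=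
  ⟨fun h => by_contra fun hne => h.resolve_left hne u hu hne (.refl _), Or.inl⟩

lemma inBranch_unique (hΓ : Γ.Connected) (hp : p ∈ B) (hq : q ∈ B) (hpu : InBranch Γ B p u)
    (hqu : InBranch Γ B q u) : p = q := by
  by_contra hne
  rcases hpu with rfl | hpu
  · exact hne ((inBranch_iff_eq_of_mem hp).1 hqu)
  rcases hqu with rfl | hqu
  · exact hpu u hq (Ne.symm hne) (.refl _)
  rcases ReachAvoid.or_reachAvoid hΓ hne u with h | h
  · exact hpu q hq (Ne.symm hne) h
  · exact hqu p hp hne h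

lemma eq_or_eq_and_eq_of_adj (hΓ : Γ.Connected) (huv : Γ.Adj u v) (hp : p ∈ B) (hq : q ∈ B)
    (hpu : InBranch Γ B p u) (hqv : InBranch Γ B q v) : p = q ∨ u = p ∧ v = q := by
  by_cases hup : u = p
  · subst hup
    by_cases hvq : v = q
    · exact Or.inr ⟨rfl, hvq⟩
    · by_cases huq : u = q
      · exact Or.inl huq
      · exact Or.inl ((inBranch_iff_eq_of_mem hp).1
          ((inBranch_congr (.of_adj huv huq hvq) huq).2 hqv))
  · by_cases hvp : v = p
    · subst hvp
      exact Or.inl ((inBranch_iff_eq_of_mem hp).1 hqv)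
    · exact Or.inl (inBranch_unique hΓ hp hq ((inBranch_congr (.of_adj huv hup hvp) hup).1 hpu) hqv)

namespace IsInsepClass

lemma nonempty (hB : IsInsepClass Γ B) (hΓ : Γ.Connected) : B.Nonempty := by
  obtain ⟨o⟩ := hΓ.nonempty
  by_contra hempty
  rw [Set.not_nonempty_iff_eq_empty] at hempty
  subst hempty
  exact hB.mem_of_insep o (by simp)

lemma exists_inBranch (hB : IsInsepClass Γ B) (hΓ : Γ.Connected) (u : Fin n) :
    ∃ p ∈ B, InBranch Γ B p u := by
  by_contra! hout
  obtain ⟨b, hb⟩ := hB.nonempty hΓ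
  have hlast : ∃ z, (∀ p ∈ B, ¬ InBranch Γ B p z) ∧ ∃ b₀ ∈ B, Γ.Adj z b₀ := by
    obtain ⟨W⟩ := hΓ.preconnected u b
    induction W with
    | nil => exact absurd (inBranch_self Γ B _) (hout _ hb)
    | @cons a c d ha _ ih =>
      by_cases hc : c ∈ B
      · exact ⟨a, hout, c, hc, ha⟩
      · refine ih (fun p hp hpc => ?_) hb
        have hap : a ≠ p := fun h => hout p hp (Or.inl h)
        have hcp : c ≠ p := fun h => hc (h ▸ hp)
        exact hout p hp ((inBranch_congr (.of_adj ha hap hcp) hap).2 hpc)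
  obtain ⟨z, hz, b₀, hb₀, hadj⟩ := hlast
  have hzB : z ∈ B := by
    refine hB.mem_of_insep z fun v hv q hqz hqv => ?_
    by_cases hq : q ∈ B
    · obtain ⟨_, x, hx, hxq, hzx⟩ := not_inBranch_iff.1 (hz q hq)
      exact hzx.trans (hB.insep x hx v hv q hxq.symm hqv)
    · have hqb : q ≠ b₀ := fun h => hq (h ▸ hb₀)
      exact (ReachAvoid.of_adj hadj hqz.symm hqb.symm).trans (hB.insep b₀ hb₀ v hv q hqb hqv)
  exact hz z hzB (inBranch_self Γ B z)

lemma inBranch_iff_of_adj (hB : IsInsepClass Γ B) (hΓ : Γ.Connected)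
    (huv : Γ.Adj u v) (hne : ¬ (u ∈ B ∧ v ∈ B)) (hp : p ∈ B) :
    InBranch Γ B p u ↔ InBranch Γ B p v := by
  have htransfer : ∀ {u v}, Γ.Adj u v → ¬ (u ∈ B ∧ v ∈ B) → InBranch Γ B p u →
      InBranch Γ B p v := by
    intro u v huv hne hpu
    obtain ⟨q, hq, hqv⟩ := hB.exists_inBranch hΓ v
    obtain rfl | ⟨rfl, rfl⟩ := eq_or_eq_and_eq_of_adj hΓ huv hp hq hpu hqv
    · exact hqv
    · exact absurd ⟨hp, hq⟩ hne
  exact ⟨htransfer huv hne, htransfer huv.symm (mt And.symm hne)⟩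

/-- Sending every vertex to the vertex of `B` at which it branches off maps walks of a subgraph
`H` of `Γ` to walks in `B`. -/
lemma reachable_induce {S : Set (Fin n)} {H : SimpleGraph (Fin n)} (hB : IsInsepClass Γ B)
    (hΓ : Γ.Connected) (hH : H ≤ Γ) (huB : u ∈ B) (huS : u ∈ S)
    (hS : ∀ x p, H.Reachable u x → p ∈ B → InBranch Γ B p x → p ∈ S) (hv : H.Reachable u v)
    (hp : p ∈ B) (hpv : InBranch Γ B p v) :
    (Γ.induce S).Reachable ⟨u, huS⟩ ⟨p, hS v p hv hp hpv⟩ := by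
  have hv' := (SimpleGraph.reachable_iff_reflTransGen _ _).1 hv
  induction hv' generalizing p with
  | refl =>
    obtain rfl := (inBranch_iff_eq_of_mem huB).1 hpv
    exact .refl _
  | @tail b c hub hbc ih =>
    have hb : H.Reachable u b := (SimpleGraph.reachable_iff_reflTransGen _ _).2 hub
    obtain ⟨q, hq, hqb⟩ := hB.exists_inBranch hΓ b
    rcases eq_or_eq_and_eq_of_adj hΓ (hH hbc) hq hp hqb hpv with rfl | ⟨rfl, rfl⟩
    · exact ih hb hq hqb
    · exact (ih hb hq hqb).trans (SimpleGraph.Adj.reachable (by simpa using hH hbc))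

lemma two_le_ncard [Nontrivial (Fin n)] (hB : IsInsepClass Γ B) (hΓ : Γ.Connected) :
    2 ≤ B.ncard := by
  obtain ⟨u, hu⟩ := hB.nonempty hΓ
  by_contra! hlt
  have hsub : ∀ {x y}, x ∈ B → y ∈ B → x = y :=
    (Set.ncard_le_one_iff (Set.toFinite B)).1 (Nat.le_of_lt_succ hlt)
  obtain ⟨v, huv⟩ := hΓ.preconnected.exists_adj_of_nontrivial u
  have hv : v ∈ B := hB.mem_of_insep v fun x hx => hsub hx hu ▸ (Insep.of_adj huv).symm
  exact huv.ne (hsub hu hv)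

lemma isBiconn [Nontrivial (Fin n)] (hB : IsInsepClass Γ B) (hΓ : Γ.Connected) :
    IsBiconn Γ B := by
  have htwo := hB.two_le_ncard hΓ
  refine ⟨htwo, ?_, fun b hb => ?_⟩
  · have : Nonempty B := (hB.nonempty hΓ).to_subtype
    exact ⟨fun x y => hB.reachable_induce hΓ le_rfl x.2 x.2 (fun _ _ _ hp _ => hp)
      (hΓ.preconnected x y) y.2 (inBranch_self Γ B y)⟩
  · obtain ⟨v, hv, hvb⟩ := Set.exists_ne_of_one_lt_ncard htwo b
    have : Nonempty (B \ {b} : Set (Fin n)) := ⟨⟨v, hv, hvb⟩⟩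
    refine ⟨fun x y => ?_⟩
    refine hB.reachable_induce hΓ (SimpleGraph.deleteEdges_le _) x.2.1 x.2
      (fun z p hz hp hpz => ⟨hp, ?_⟩)
      (hB.insep _ x.2.1 _ y.2.1 b (Ne.symm x.2.2) (Ne.symm y.2.2)) y.2.1 (inBranch_self Γ B y)
    rintro rfl
    rcases hpz with h | h
    · exact ReachAvoid.ne hz x.2.2 h
    · exact h x x.2.1 x.2.2 hz.symm

lemma exists_adj [Nontrivial (Fin n)] (hB : IsInsepClass Γ B) (hΓ : Γ.Connected) :
    ∃ i ∈ B, ∃ j ∈ B, Γ.Adj i j := by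
  have hconn := (hB.isBiconn hΓ).2.1
  have : Nontrivial B :=
    Set.nontrivial_coe_sort.2 (Set.one_lt_ncard_iff_nontrivial.1 (hB.two_le_ncard hΓ))
  obtain ⟨i⟩ := hconn.nonempty
  obtain ⟨j, hij⟩ := hconn.preconnected.exists_adj_of_nontrivial i
  exact ⟨i, i.2, j, j.2, hij⟩

lemma eq_of_mem (hB : IsInsepClass Γ B) (hB' : IsInsepClass Γ B') (hpq : p ≠ q) (hp : p ∈ B)
    (hq : q ∈ B) (hp' : p ∈ B') (hq' : q ∈ B') : B = B' := by
  have hinsep : ∀ u ∈ B, ∀ v ∈ B', Insep Γ u v := by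
    intro u hu v hv x hxu hxv
    by_cases hxp : x = p
    · have hxq : x ≠ q := hxp ▸ hpq
      exact (hB.insep u hu q hq x hxu hxq).trans (hB'.insep q hq' v hv x hxq hxv)
    · exact (hB.insep u hu p hp x hxu hxp).trans (hB'.insep p hp' v hv x hxp hxv)
  exact Set.Subset.antisymm (fun z hz => hB'.mem_of_insep z (hinsep z hz))
    (fun z hz => hB.mem_of_insep z fun u hu => (hinsep u hu z hz).symm)

lemma eq_of_not_inBranch (hΓ : Γ.Connected) (hB : IsInsepClass Γ B) (hp : p ∈ B)
    (h : ¬ InBranch Γ B p v) (hB' : IsInsepClass Γ B') (hp' : p ∈ B')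
    (h' : ¬ InBranch Γ B' p v) : B = B' := by
  obtain ⟨-, g, hg, hgp, hvg⟩ := not_inBranch_iff.1 h
  obtain ⟨-, g', hg', hgp', hvg'⟩ := not_inBranch_iff.1 h'
  obtain ⟨c, hc, hcg'⟩ := hB.exists_inBranch hΓ g'
  by_cases hcg : g' = c
  · subst hcg
    exact hB.eq_of_mem hB' hgp'.symm hp hc hp' hg'
  · exfalso
    replace hcg' := hcg'.resolve_left hcg
    by_cases hpc : p = c
    · subst hpc
      exact hcg' g hg hgp (hvg'.symm.trans hvg)
    · exact hcg' p hp hpc (hB'.insep g' hg' p hp' c (Ne.symm hcg) (Ne.symm hpc))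

end IsInsepClass

lemma insep_of_isBiconn (hB : IsBiconn Γ B) (hu : u ∈ B) (hv : v ∈ B) : Insep Γ u v := by
  intro q hqu hqv
  by_cases hq : q ∈ B
  · exact .of_induce (S := B \ {q}) (by simp)
      ((hB.2.2 q hq).preconnected ⟨u, hu, hqu.symm⟩ ⟨v, hv, hqv.symm⟩)
  · exact .of_induce hq (hB.2.1.preconnected ⟨u, hu⟩ ⟨v, hv⟩)

lemma isBlock_iff_isInsepClass [Nontrivial (Fin n)] (hΓ : Γ.Connected) :
    IsBlock Γ B ↔ IsInsepClass Γ B := by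
  constructor
  · rintro ⟨hbi, hmax⟩
    obtain ⟨M, hM, hBM⟩ := exists_isInsepClass_superset fun u hu v hv => insep_of_isBiconn hbi hu hv
    exact hmax M (hM.isBiconn hΓ) hBM ▸ hM
  · intro hB
    refine ⟨hB.isBiconn hΓ, fun B' hB' hsub => ?_⟩
    refine Set.Subset.antisymm (fun z hz => ?_) hsub
    exact hB.mem_of_insep z fun u hu => insep_of_isBiconn hB' hz (hsub hu)

lemma exists_isInsepClass_not_inBranch (hΓ : Γ.Connected) (hv : v ≠ p) :
    ∃ B, IsInsepClass Γ B ∧ p ∈ B ∧ ¬ InBranch Γ B p v := by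
  obtain ⟨g, hpg, hvg⟩ := ReachAvoid.exists_adj hΓ hv
  obtain ⟨B, hB, hp, hg⟩ := exists_isInsepClass_of_adj hpg
  exact ⟨B, hB, hp, not_inBranch_iff.2 ⟨hv, g, hg, hpg.ne.symm, hvg⟩⟩

end Blocks

/-! ### Cut vertices, cut edges and the block count -/

section Counting

variable {n : ℕ} {Γ : SimpleGraph (Fin n)} {B : Set (Fin n)} {i j p u v : Fin n}

lemma not_isCutVtx_iff [Nontrivial (Fin n)] :
    ¬ IsCutVtx Γ j ↔ ∀ u v, u ≠ j → v ≠ j → ReachAvoid Γ j u v := by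
  obtain ⟨x, hx⟩ := exists_ne j
  have : Nonempty ({j}ᶜ : Set (Fin n)) := ⟨⟨x, hx⟩⟩
  rw [IsCutVtx, not_not]
  exact ⟨fun h u v hu hv => .of_induce (S := {j}ᶜ) (by simp) (h.preconnected ⟨u, hu⟩ ⟨v, hv⟩),
    fun h => ⟨fun a b => (h a b a.2 b.2).induce_compl a.2 b.2⟩⟩

lemma numComp_eq_one [Nontrivial (Fin n)] (hj : ¬ IsCutVtx Γ j) : numComp Γ j = 1 := by
  rw [not_isCutVtx_iff] at hj
  have hclass : ∀ v, v ≠ j → {y | (delVertexEdges Γ j).Reachable v y} = {j}ᶜ := fun v hv =>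
    Set.ext fun y => ⟨fun h => ReachAvoid.ne h hv, fun hy => hj v y hv hy⟩
  rw [numComp, Set.ncard_eq_one]
  refine ⟨{j}ᶜ, Set.ext fun G => ⟨?_, ?_⟩⟩
  · rintro ⟨v, hv, rfl⟩
    exact hclass v hv
  · rintro rfl
    obtain ⟨v, hv⟩ := exists_ne j
    exact ⟨v, hv, (hclass v hv).symm⟩

namespace IsInsepClass

lemma exists_not_inBranch [Nontrivial (Fin n)] (hB : IsInsepClass Γ B) (hΓ : Γ.Connected)
    (p : Fin n) : ∃ v ∈ B, ¬ InBranch Γ B p v := by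
  obtain ⟨v, hv, hvp⟩ := Set.exists_ne_of_one_lt_ncard (hB.two_le_ncard hΓ) p
  exact ⟨v, hv, fun h => hvp ((inBranch_iff_eq_of_mem hv).1 h)⟩

lemma not_inBranch_iff_reachAvoid (hB : IsInsepClass Γ B) (hv : ¬ InBranch Γ B p v) :
    ¬ InBranch Γ B p u ↔ ReachAvoid Γ p v u := by
  obtain ⟨hvp, x, hx, hxp, hvx⟩ := not_inBranch_iff.1 hv
  refine ⟨fun hu => ?_, fun h => (inBranch_congr h hvp).not.1 hv⟩
  obtain ⟨-, y, hy, hyp, huy⟩ := not_inBranch_iff.1 hu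
  exact (hvx.trans (hB.insep x hx y hy p hxp.symm hyp.symm)).trans huy.symm

lemma exists_isCutVtx_mem [Nontrivial (Fin n)] (hB : IsInsepClass Γ B) (hΓ : Γ.Connected)
    (hcut : ∃ j, IsCutVtx Γ j) : ∃ p ∈ B, IsCutVtx Γ p := by
  obtain ⟨j, hj⟩ := hcut
  obtain ⟨p, hp, hpj⟩ := hB.exists_inBranch hΓ j
  refine ⟨p, hp, ?_⟩
  rcases hpj with rfl | hpj
  · exact hj
  by_contra hncut
  obtain ⟨v, hv, hpv⟩ := hB.exists_not_inBranch hΓ p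
  have hvp : v ≠ p := (not_inBranch_iff.1 hpv).1
  by_cases hjp : j = p
  · exact hncut (hjp ▸ hj)
  · exact hpj v hv hvp (not_isCutVtx_iff.1 hncut j v hjp hvp)

end IsInsepClass

open Classical in
/-- The blocks of `Γ`, as a finset. -/
noncomputable def blocks (Γ : SimpleGraph (Fin n)) : Finset (Set (Fin n)) :=
  {B | IsInsepClass Γ B}

lemma mem_blocks : B ∈ blocks Γ ↔ IsInsepClass Γ B := by
  simp only [blocks, mem_filter_univ]

lemma card_filter_mem [DecidablePred (· ∈ B)] : #{p | p ∈ B} = B.ncard := by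
  rw [← Set.ncard_coe_finset, coe_filter_univ, Set.ofPred_mem_eq]

open Classical in
lemma numComp_eq_card_blocks [Nontrivial (Fin n)] (hΓ : Γ.Connected) (p : Fin n) :
    numComp Γ p = #{B ∈ blocks Γ | p ∈ B} := by
  let away (B : Set (Fin n)) : Set (Fin n) := {y | ¬ InBranch Γ B p y}
  have hcomps : {G : Set (Fin n) | ∃ v, v ≠ p ∧ G = {y | (delVertexEdges Γ p).Reachable v y}} =
      away '' {B | IsInsepClass Γ B ∧ p ∈ B} := by
    ext G
    constructor
    · rintro ⟨v, hv, rfl⟩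
      obtain ⟨B, hB, hp, hpv⟩ := exists_isInsepClass_not_inBranch hΓ hv
      exact ⟨B, ⟨hB, hp⟩, Set.ext fun y => hB.not_inBranch_iff_reachAvoid hpv⟩
    · rintro ⟨B, ⟨hB, _⟩, rfl⟩
      obtain ⟨v, -, hpv⟩ := hB.exists_not_inBranch hΓ p
      exact ⟨v, (not_inBranch_iff.1 hpv).1, Set.ext fun y => hB.not_inBranch_iff_reachAvoid hpv⟩
  have hinj : Set.InjOn away {B | IsInsepClass Γ B ∧ p ∈ B} := by
    rintro B ⟨hB, hp⟩ B' ⟨hB', hp'⟩ heq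
    obtain ⟨v, -, hpv⟩ := hB.exists_not_inBranch hΓ p
    exact IsInsepClass.eq_of_not_inBranch hΓ hB hp hpv hB' hp' ((Set.ext_iff.1 heq v).1 hpv)
  rw [numComp, hcomps, hinj.ncard_image, ← Set.ncard_coe_finset]
  simp only [coe_filter, mem_blocks]

open Classical in
lemma sum_numComp [Nontrivial (Fin n)] (hΓ : Γ.Connected) :
    ∑ p, numComp Γ p = ∑ B ∈ blocks Γ, B.ncard := by
  simp only [numComp_eq_card_blocks hΓ, ← card_filter_mem]
  exact (sum_card_bipartiteAbove_eq_sum_card_bipartiteBelow fun B p => p ∈ B).symm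

open Classical in
lemma IsInsepClass.card_not_inBranch (hB : IsInsepClass Γ B) (hΓ : Γ.Connected) (o : Fin n) :
    #{p | p ∈ B ∧ ¬ InBranch Γ B p o} + 1 = B.ncard := by
  obtain ⟨q, hq, hqo⟩ := hB.exists_inBranch hΓ o
  have herase : ({p | p ∈ B ∧ ¬ InBranch Γ B p o} : Finset (Fin n)) =
      ({p | p ∈ B} : Finset (Fin n)).erase q := by
    ext p
    simp only [mem_filter_univ, mem_erase]
    exact ⟨fun h => ⟨fun hpq => h.2 (hpq ▸ hqo), h.1⟩,
      fun h => ⟨h.2, fun hpo => h.1 (inBranch_unique hΓ h.2 hq hpo hqo)⟩⟩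
  rw [herase, card_erase_add_one (mem_filter_univ q |>.2 hq), card_filter_mem]

open Classical in
lemma card_blocks_not_inBranch (hΓ : Γ.Connected) (o p : Fin n) :
    #{B ∈ blocks Γ | p ∈ B ∧ ¬ InBranch Γ B p o} = if p = o then 0 else 1 := by
  split_ifs with h
  · subst h
    simp only [inBranch_self, not_true_eq_false, and_false, filter_false, card_empty]
  · obtain ⟨B, hB, hp, hpo⟩ := exists_isInsepClass_not_inBranch hΓ (Ne.symm h)
    refine card_eq_one.2 ⟨B, ext fun B' => ?_⟩
    simp only [mem_filter, mem_blocks, mem_singleton]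
    exact ⟨fun h' => IsInsepClass.eq_of_not_inBranch hΓ h'.1 h'.2.1 h'.2.2 hB hp hpo,
      fun h' => h' ▸ ⟨hB, hp, hpo⟩⟩

/-- Rooting the block tree at a vertex `o`, every other vertex lies in exactly one block towards
`o`, and every block has exactly one vertex that is not counted this way. -/
lemma sum_ncard_blocks (hΓ : Γ.Connected) :
    ∑ B ∈ blocks Γ, B.ncard + 1 = #(blocks Γ) + n := by
  classical
  obtain ⟨o⟩ := hΓ.nonempty
  have hcount : ∑ B ∈ blocks Γ, #{p | p ∈ B ∧ ¬ InBranch Γ B p o} =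
      ∑ p, #{B ∈ blocks Γ | p ∈ B ∧ ¬ InBranch Γ B p o} :=
    sum_card_bipartiteAbove_eq_sum_card_bipartiteBelow fun B p => p ∈ B ∧ ¬ InBranch Γ B p o
  have hrest : ∑ p, #{B ∈ blocks Γ | p ∈ B ∧ ¬ InBranch Γ B p o} + 1 = n := by
    simp only [card_blocks_not_inBranch hΓ, sum_ite, sum_const_zero, zero_add, sum_const,
      smul_eq_mul, mul_one, filter_ne', card_erase_add_one (mem_univ o), card_univ,
      Fintype.card_fin]
  rw [← sum_congr rfl fun B hB => (mem_blocks.1 hB).card_not_inBranch hΓ o, sum_add_distrib,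
    hcount, sum_const, smul_eq_mul, mul_one, add_right_comm, hrest, add_comm]

/-- The component of `i` in `Γ` without the edge `{i, j}`. -/
def cutSide (Γ : SimpleGraph (Fin n)) (i j : Fin n) : Set (Fin n) :=
  {y | (Γ.deleteEdges {s(i, j)}).Reachable i y}

lemma reachAvoid_of_inBranch_pair (hΓ : Γ.Connected) (hij : i ≠ j)
    (hu : InBranch Γ {i, j} i u) : ReachAvoid Γ j u i := by
  rcases hu with rfl | hu
  · exact .refl _
  · exact (ReachAvoid.or_reachAvoid hΓ hij u).resolve_left (hu j (by simp) hij.symm)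

lemma mem_cutSide_iff_inBranch (hΓ : Γ.Connected) (hij : i ≠ j) (hB : IsInsepClass Γ {i, j}) :
    u ∈ cutSide Γ i j ↔ InBranch Γ {i, j} i u := by
  constructor
  · intro hu
    have hu' := (SimpleGraph.reachable_iff_reflTransGen _ _).1 hu
    clear hu
    induction hu' with
    | refl => exact inBranch_self Γ _ i
    | @tail x y _ hxy ih =>
      rw [SimpleGraph.deleteEdges_adj, Set.mem_singleton_iff] at hxy
      obtain ⟨q, hq, hqy⟩ := hB.exists_inBranch hΓ y
      rcases eq_or_eq_and_eq_of_adj hΓ hxy.1 (Set.mem_insert i _) hq ih hqy with rfl | ⟨rfl, rfl⟩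
      · exact hqy
      · rcases hq with rfl | rfl
        · exact hqy
        · exact absurd rfl hxy.2
  · intro hu
    exact ((reachAvoid_of_inBranch_pair hΓ hij hu).reachable_deleteEdges
      (Sym2.mem_mk_right i j)).symm

lemma isCutEdge_iff_isInsepClass (hΓ : Γ.Connected) (hij : i ≠ j) :
    IsCutEdge Γ i j ↔ IsInsepClass Γ {i, j} := by
  constructor
  · rintro ⟨hadj, hcut⟩
    obtain ⟨B, hB, hi, hj⟩ := exists_isInsepClass_of_adj hadj
    suffices B = {i, j} from this ▸ hB
    refine Set.Subset.antisymm (fun u hu => by_contra fun hne => hcut ?_)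
      (Set.insert_subset hi (Set.singleton_subset_iff.2 hj))
    simp only [Set.mem_insert_iff, Set.mem_singleton_iff, not_or] at hne
    have hiu := (hB.insep i hi u hu j hij.symm (Ne.symm hne.2)).reachable_deleteEdges
      (Sym2.mem_mk_right i j)
    have huj := (hB.insep u hu j hj i (Ne.symm hne.1) hij).reachable_deleteEdges
      (Sym2.mem_mk_left i j)
    exact hΓ.connected_delete_edge_of_not_isBridge
      (SimpleGraph.isBridge_iff.not_left.2 (hiu.trans huj))
  · intro hB
    have hnot : ¬ (Γ.deleteEdges {s(i, j)}).Reachable i j := fun h => hij.symm <|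
      (inBranch_iff_eq_of_mem (by simp)).1 ((mem_cutSide_iff_inBranch hΓ hij hB).1 h)
    refine ⟨by_contra fun hadj => hnot ?_, fun h => hnot (h.preconnected i j)⟩
    rw [SimpleGraph.deleteEdges_eq_self.2 (by simpa using hadj)]
    exact hΓ.preconnected i j

lemma compl_cutSide (hΓ : Γ.Connected) (hc : IsCutEdge Γ i j) :
    (cutSide Γ i j)ᶜ = cutSide Γ j i := by
  have hB := (isCutEdge_iff_isInsepClass hΓ hc.1.ne).1 hc
  ext u
  rw [Set.mem_compl_iff, mem_cutSide_iff_inBranch hΓ hc.1.ne hB,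
    mem_cutSide_iff_inBranch hΓ hc.1.ne.symm (Set.pair_comm i j ▸ hB), Set.pair_comm j i]
  obtain ⟨q, hq, hqu⟩ := hB.exists_inBranch hΓ u
  constructor
  · intro hi
    rcases hq with rfl | rfl
    · exact absurd hqu hi
    · exact hqu
  · exact fun hj hi => hc.1.ne (inBranch_unique hΓ (by simp) (by simp) hi hj)

lemma reachAvoid_of_mem_cutSide (hΓ : Γ.Connected) (hc : IsCutEdge Γ i j)
    (hu : u ∈ cutSide Γ i j) : ReachAvoid Γ j u i :=
  reachAvoid_of_inBranch_pair hΓ hc.1.ne <| (mem_cutSide_iff_inBranch hΓ hc.1.ne <|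
    (isCutEdge_iff_isInsepClass hΓ hc.1.ne).1 hc).1 hu

lemma cutSide_eq_singleton [Nontrivial (Fin n)] (hΓ : Γ.Connected) (hc : IsCutEdge Γ i j)
    (hi : ¬ IsCutVtx Γ i) : cutSide Γ i j = {i} := by
  refine Set.Subset.antisymm (fun u hu => by_contra fun hui => ?_)
    (Set.singleton_subset_iff.2 (SimpleGraph.Reachable.refl _))
  have hB := (isCutEdge_iff_isInsepClass hΓ hc.1.ne).1 hc
  exact ((mem_cutSide_iff_inBranch hΓ hc.1.ne hB).1 hu).resolve_left hui j (by simp) hc.1.ne.symm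
    (not_isCutVtx_iff.1 hi u j hui hc.1.ne.symm)

lemma choose_ncard_cutSide [Nontrivial (Fin n)] (hΓ : Γ.Connected) (hc : IsCutEdge Γ i j)
    (h : ¬ (IsCutVtx Γ i ∧ IsCutVtx Γ j)) : n.choose (cutSide Γ i j).ncard = n := by
  by_cases hi : IsCutVtx Γ i
  · have hc' : IsCutEdge Γ j i := ⟨hc.1.symm, Sym2.eq_swap (a := i) ▸ hc.2⟩
    have hside := cutSide_eq_singleton hΓ hc' fun hj => h ⟨hi, hj⟩
    have hcompl := Set.ncard_add_ncard_compl (cutSide Γ i j)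
    rw [compl_cutSide hΓ hc, hside, Set.ncard_singleton, Nat.card_fin] at hcompl
    rw [Nat.choose_symm_of_eq_add hcompl.symm, Nat.choose_one_right]
  · rw [cutSide_eq_singleton hΓ hc hi, Set.ncard_singleton, Nat.choose_one_right]

open Classical in
/-- The cut edges of `Γ`, each represented by its increasing pair of endpoints. -/
noncomputable def cutEdges (Γ : SimpleGraph (Fin n)) : Finset (Fin n × Fin n) :=
  {s | s.1 < s.2 ∧ IsCutEdge Γ s.1 s.2}

lemma mem_cutEdges {s : Fin n × Fin n} :
    s ∈ cutEdges Γ ↔ s.1 < s.2 ∧ IsCutEdge Γ s.1 s.2 := by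
  simp only [cutEdges, mem_filter_univ]

open Classical in
/-- The cut edges with an endpoint that is not a cut vertex. -/
noncomputable def pendantCutEdges (Γ : SimpleGraph (Fin n)) : Finset (Fin n × Fin n) :=
  {s ∈ cutEdges Γ | ¬ (IsCutVtx Γ s.1 ∧ IsCutVtx Γ s.2)}

/-- The blocks with more than two vertices. -/
noncomputable def bigBlocks (Γ : SimpleGraph (Fin n)) : Finset (Set (Fin n)) :=
  {B ∈ blocks Γ | 2 < B.ncard}

lemma mem_bigBlocks : B ∈ bigBlocks Γ ↔ IsInsepClass Γ B ∧ 2 < B.ncard := by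
  simp only [bigBlocks, mem_filter, mem_blocks]

lemma sum_blocks [Nontrivial (Fin n)] {M : Type*} [AddCommMonoid M] (hΓ : Γ.Connected)
    (f : Set (Fin n) → M) :
    ∑ B ∈ blocks Γ, f B = ∑ s ∈ cutEdges Γ, f {s.1, s.2} + ∑ B ∈ bigBlocks Γ, f B := by
  rw [← sum_filter_not_add_sum_filter (blocks Γ) fun B => 2 < B.ncard, ← bigBlocks]
  congr 1
  refine (sum_nbij (fun s : Fin n × Fin n => ({s.1, s.2} : Set (Fin n))) ?_ ?_ ?_
    fun _ _ => rfl).symm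
  · intro s hs
    rw [mem_cutEdges] at hs
    rw [mem_filter, mem_blocks, not_lt]
    exact ⟨(isCutEdge_iff_isInsepClass hΓ hs.1.ne).1 hs.2, (Set.ncard_pair hs.1.ne).le⟩
  · intro s hs t ht hst
    rw [mem_coe, mem_cutEdges] at hs ht
    rcases Set.pair_eq_pair_iff.1 hst with ⟨h₁, h₂⟩ | ⟨h₁, h₂⟩
    · exact Prod.ext h₁ h₂
    · exact absurd (h₁ ▸ h₂ ▸ ht.1) hs.1.asymm
  · intro B hB
    rw [mem_coe, mem_filter, mem_blocks, not_lt] at hB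
    obtain ⟨x, y, hxy, rfl⟩ : ∃ x y, x < y ∧ B = {x, y} := by
      obtain ⟨x, y, hne, rfl⟩ := Set.ncard_eq_two.1 (hB.2.antisymm (hB.1.two_le_ncard hΓ))
      rcases hne.lt_or_gt with h | h
      · exact ⟨x, y, h, rfl⟩
      · exact ⟨y, x, h, Set.pair_comm x y⟩
    exact ⟨(x, y), mem_cutEdges.2 ⟨hxy, (isCutEdge_iff_isInsepClass hΓ hxy.ne).2 hB.1⟩, rfl⟩

end Counting

section Invariant

variable {n : ℕ} {Γ : SimpleGraph (Fin n)} {B : Set (Fin n)} {i j : Fin n}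

/-- The number of cut vertices in a set of vertices. -/
noncomputable abbrev cutVtxCount (Γ : SimpleGraph (Fin n)) (B : Set (Fin n)) : ℕ :=
  {j ∈ B | IsCutVtx Γ j}.ncard

lemma one_le_cutVtxCount [Nontrivial (Fin n)] (hΓ : Γ.Connected) (hcut : ∃ j, IsCutVtx Γ j)
    (hB : IsInsepClass Γ B) : 1 ≤ cutVtxCount Γ B :=
  Nat.one_le_iff_ne_zero.2 (Set.ncard_ne_zero_of_mem (hB.exists_isCutVtx_mem hΓ hcut).choose_spec)

lemma cutVtxCount_pair_eq_one_iff (hij : i ≠ j) (hpos : 1 ≤ cutVtxCount Γ {i, j}) :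
    cutVtxCount Γ {i, j} = 1 ↔ ¬ (IsCutVtx Γ i ∧ IsCutVtx Γ j) := by
  have hpair := Set.ncard_pair hij
  have hsub : {k ∈ ({i, j} : Set (Fin n)) | IsCutVtx Γ k} ⊆ {i, j} := Set.sep_subset _ _
  have hle : cutVtxCount Γ {i, j} ≤ ({i, j} : Set (Fin n)).ncard := Set.ncard_le_ncard hsub
  have htwo : cutVtxCount Γ {i, j} = 2 ↔ IsCutVtx Γ i ∧ IsCutVtx Γ j := by
    constructor
    · intro h
      have heq := Set.eq_of_subset_of_ncard_le hsub (hpair.trans h.symm).le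
      exact ⟨(heq.ge (Set.mem_insert i _)).2, (heq.ge (Set.mem_insert_of_mem i rfl)).2⟩
    · rintro ⟨hi, hj⟩
      rw [← hpair, cutVtxCount]
      congr 1
      refine Set.Subset.antisymm hsub ?_
      rintro k (rfl | rfl)
      · exact ⟨Set.mem_insert _ _, hi⟩
      · exact ⟨Set.mem_insert_of_mem _ rfl, hj⟩
  rw [← htwo]
  omega

lemma card_pendantCutEdges [Nontrivial (Fin n)] (hΓ : Γ.Connected) (hcut : ∃ j, IsCutVtx Γ j) :
    #{s ∈ cutEdges Γ | cutVtxCount Γ {s.1, s.2} = 1} = #(pendantCutEdges Γ) := by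
  classical
  rw [pendantCutEdges]
  congr 1
  refine filter_congr fun s hs => ?_
  rw [mem_cutEdges] at hs
  exact cutVtxCount_pair_eq_one_iff hs.1.ne
    (one_le_cutVtxCount hΓ hcut ((isCutEdge_iff_isInsepClass hΓ hs.1.ne).1 hs.2))

lemma blocks_eq_singleton_univ [Nontrivial (Fin n)] (hcut : ¬ ∃ j, IsCutVtx Γ j) :
    blocks Γ = {Set.univ} := by
  rw [not_exists] at hcut
  have hall : ∀ u v, Insep Γ u v := fun u v q hu hv =>
    not_isCutVtx_iff.1 (hcut q) u v hu.symm hv.symm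
  ext B
  rw [mem_blocks, mem_singleton]
  constructor
  · exact fun hB => Set.eq_univ_of_forall fun z => hB.mem_of_insep z fun u _ => hall z u
  · rintro rfl
    exact ⟨fun u _ v _ => hall u v, fun z _ => Set.mem_univ z⟩

lemma ncard_leafBlocks_add_ncard_internalBlocks (hn : 3 ≤ n) (hΓ : Γ.Connected) :
    (LeafBlocks Γ).ncard + {B ∈ InternalBlocks Γ | 2 < B.ncard}.ncard =
      #(bigBlocks Γ) + #(pendantCutEdges Γ) := by
  have : Nontrivial (Fin n) := Fin.nontrivial_iff_two_le.2 (by omega)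
  by_cases hcut : ∃ j, IsCutVtx Γ j
  · have hleaf : LeafBlocks Γ = ({B ∈ blocks Γ | cutVtxCount Γ B = 1} : Finset _) := by
      ext B
      simp only [LeafBlocks, if_pos hcut, isBlock_iff_isInsepClass hΓ, coe_filter, mem_blocks]
    have hinternal : {B ∈ InternalBlocks Γ | 2 < B.ncard} =
        ({B ∈ bigBlocks Γ | ¬ cutVtxCount Γ B = 1} : Finset _) := by
      ext B
      simp only [InternalBlocks, if_pos hcut, isBlock_iff_isInsepClass hΓ, coe_filter,
        mem_bigBlocks, Set.mem_ofPred_eq, and_assoc, and_congr_right_iff, and_comm (a := 2 < _)]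
      intro hB
      have hpos := one_le_cutVtxCount hΓ hcut hB
      exact and_congr_left fun _ => hpos.lt_iff_ne'
    rw [hleaf, hinternal, Set.ncard_coe_finset, Set.ncard_coe_finset, card_filter, sum_blocks hΓ,
      ← card_filter, ← card_filter, card_pendantCutEdges hΓ hcut, add_assoc,
      card_filter_add_card_filter_not, add_comm]
  · have hblocks := blocks_eq_singleton_univ hcut
    have huniv : 2 < (Set.univ : Set (Fin n)).ncard := by rwa [Set.ncard_univ, Nat.card_fin]
    have hbig : bigBlocks Γ = {Set.univ} := by
      rw [bigBlocks, hblocks, filter_singleton, if_pos huniv]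
    have hcutEdges : cutEdges Γ = ∅ := by
      have hsum := sum_blocks hΓ fun _ => 1
      simp only [hblocks, hbig, sum_singleton, ← card_eq_sum_ones] at hsum
      exact card_eq_zero.1 (by omega)
    have hinternal : {B ∈ ({Set.univ} : Set (Set (Fin n))) | 2 < B.ncard} = {Set.univ} :=
      Set.sep_eq_self_iff_mem_true.2 (by rintro B rfl; exact huniv)
    rw [LeafBlocks, InternalBlocks, if_neg hcut, if_neg hcut, hinternal, hbig, pendantCutEdges,
      hcutEdges, Set.ncard_empty, Set.ncard_singleton, filter_empty, card_empty, card_singleton]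

open Classical in
lemma sum_numComp_sub_one [Nontrivial (Fin n)] (hΓ : Γ.Connected) :
    ∑ j with IsCutVtx Γ j, ((numComp Γ j : ℤ) - 1) = #(blocks Γ) - 1 := by
  have hnumComp : ∑ j, (numComp Γ j : ℤ) = ∑ B ∈ blocks Γ, (B.ncard : ℤ) := by
    exact_mod_cast sum_numComp hΓ
  have hblocks : ∑ B ∈ blocks Γ, (B.ncard : ℤ) + 1 = #(blocks Γ) + n := by
    exact_mod_cast sum_ncard_blocks hΓ
  rw [sum_filter_of_ne fun j _ hj => by_contra fun hcut => hj (by simp [numComp_eq_one hcut]),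
    sum_sub_distrib, hnumComp, sum_const, card_univ, Fintype.card_fin, nsmul_one]
  linear_combination hblocks

open Classical in
lemma sum_choose_internalCutEdges [Nontrivial (Fin n)] (hΓ : Γ.Connected) :
    ∑ s : Fin n × Fin n with
        s.1 < s.2 ∧ IsCutEdge Γ s.1 s.2 ∧ IsCutVtx Γ s.1 ∧ IsCutVtx Γ s.2,
        (n.choose (cutSide Γ s.1 s.2).ncard : ℤ) + n * #(pendantCutEdges Γ) =
      ∑ s ∈ cutEdges Γ, (n.choose (cutSide Γ s.1 s.2).ncard : ℤ) := by
  rw [← sum_filter_add_sum_filter_not (cutEdges Γ) fun s => IsCutVtx Γ s.1 ∧ IsCutVtx Γ s.2]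
  congr 1
  · refine sum_congr (ext fun s => ?_) fun _ _ => rfl
    simp only [mem_filter, mem_univ, true_and, mem_cutEdges, and_assoc]
  · have hpendant : ∀ s ∈ pendantCutEdges Γ, (n.choose (cutSide Γ s.1 s.2).ncard : ℤ) = n := by
      intro s hs
      rw [pendantCutEdges, mem_filter, mem_cutEdges] at hs
      rw [choose_ncard_cutSide hΓ hs.1.2 hs.2]
    rw [← pendantCutEdges, sum_congr rfl hpendant, sum_const, nsmul_eq_mul, mul_comm]

lemma Dinv_add_card_blocks (hn : 3 ≤ n) (hΓ : Γ.Connected) :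
    Dinv Γ + #(blocks Γ) =
      n + ∑ s ∈ cutEdges Γ, (n.choose (cutSide Γ s.1 s.2).ncard : ℤ) + n * #(bigBlocks Γ) := by
  have : Nontrivial (Fin n) := Fin.nontrivial_iff_two_le.2 (by omega)
  have hleaf : ((LeafBlocks Γ).ncard : ℤ) + {B ∈ InternalBlocks Γ | 2 < B.ncard}.ncard =
      #(bigBlocks Γ) + #(pendantCutEdges Γ) := by
    exact_mod_cast ncard_leafBlocks_add_ncard_internalBlocks hn hΓ
  rw [Dinv, hleaf, sum_numComp_sub_one hΓ, ← sum_choose_internalCutEdges hΓ]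
  simp only [cutSide]
  ring

end Invariant

/-! ### Cocycles on graphs and the Johnson graph -/

section Cocycles

variable {V A : Type*} [AddCommGroup A] {J : SimpleGraph V} {r : V → ℕ} {c : V → V → A}

/-- A function on the oriented edges of a graph that is alternating and closed on triangles, that
is, a 1-cocycle of the clique complex. Values off the edges are irrelevant. -/
structure IsTriangleCocycle (J : SimpleGraph V) (c : V → V → A) : Prop where
  antisymm : ∀ ⦃u v⦄, J.Adj u v → c u v = -c v u
  triangle : ∀ ⦃u v x⦄, J.Adj u v → J.Adj v x → J.Adj u x → c u v + c v x = c u x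

/-- A rank function exhibiting every 1-cocycle of the clique complex as a coboundary: each sphere
can be peeled off because the lower neighbours of a vertex form a graph of diameter at most `2`,
and the ends of a level edge have a common lower neighbour. -/
structure IsPeelable (J : SimpleGraph V) (r : V → ℕ) : Prop where
  rank_le : ∀ ⦃u v⦄, J.Adj u v → r u ≤ r v + 1
  exists_lower : ∀ ⦃v⦄, 0 < r v → ∃ u, J.Adj v u ∧ r u + 1 = r v
  exists_lower_of_lower : ∀ ⦃v u u'⦄, J.Adj v u → J.Adj v u' → r u + 1 = r v → r u' + 1 = r v →
    ∃ x, J.Adj v x ∧ r x + 1 = r v ∧ (x = u ∨ J.Adj x u) ∧ (x = u' ∨ J.Adj x u')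
  exists_lower_of_level : ∀ ⦃v v'⦄, J.Adj v v' → r v = r v' →
    ∃ u, J.Adj v u ∧ J.Adj v' u ∧ r u + 1 = r v

lemma IsPeelable.exists_potential_recursion (hr : IsPeelable J r) (c : V → V → A) :
    ∃ f : V → A, ∀ v, 0 < r v → ∃ u, J.Adj v u ∧ r u + 1 = r v ∧ f v = c v u + f u := by
  have hlower : ∀ v, ∃ u, 0 < r v → J.Adj v u ∧ r u + 1 = r v := fun v => by
    rcases Nat.eq_zero_or_pos (r v) with h | h
    · exact ⟨v, fun h' => absurd h h'.ne'⟩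
    · exact (hr.exists_lower h).imp fun u hu _ => hu
  choose l hl using hlower
  let F : ℕ → V → A := fun k => k.rec (fun _ => 0) fun _ G v => c v (l v) + G (l v)
  refine ⟨fun v => F (r v) v, fun v hv => ⟨l v, (hl v hv).1, (hl v hv).2, ?_⟩⟩
  change F (r v) v = c v (l v) + F (r (l v)) (l v)
  rw [← (hl v hv).2]

/-- Two lower neighbours of `v` give the same value at `v` since both are joined to a third. -/
lemma IsTriangleCocycle.eq_sub_of_lower (hc : IsTriangleCocycle J c) (hr : IsPeelable J r)
    {f : V → A} {k : ℕ} (ih : ∀ u v, J.Adj u v → r u ≤ k → r v ≤ k → c u v = f u - f v)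
    {v u₀ u : V} (hv : r v = k + 1) (hu₀ : J.Adj v u₀) (hru₀ : r u₀ + 1 = r v)
    (hf : f v = c v u₀ + f u₀) (hu : J.Adj v u) (hru : r u + 1 = r v) : c v u = f v - f u := by
  obtain ⟨x, hvx, hrx, hxu, hxu₀⟩ := hr.exists_lower_of_lower hu hu₀ hru hru₀
  have hval : ∀ y, J.Adj v y → r y + 1 = r v → (x = y ∨ J.Adj x y) → c v y + f y = c v x + f x := by
    rintro y hy hry (rfl | hxy)
    · rfl
    · rw [← hc.triangle hvx hxy hy, ih x y hxy (by omega) (by omega), add_assoc, sub_add_cancel]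
  rw [hf, hval u₀ hu₀ hru₀ hxu₀, ← hval u hu hru hxu, add_sub_cancel_right]

theorem IsTriangleCocycle.exists_potential (hc : IsTriangleCocycle J c) (hr : IsPeelable J r) :
    ∃ f : V → A, ∀ u v, J.Adj u v → c u v = f u - f v := by
  obtain ⟨f, hf⟩ := hr.exists_potential_recursion c
  suffices key : ∀ k u v, J.Adj u v → r u ≤ k → r v ≤ k → c u v = f u - f v from
    ⟨f, fun u v huv => key _ u v huv (le_max_left (r u) (r v)) (le_max_right _ _)⟩
  intro k
  induction k with
  | zero =>
    intro u v huv hu hv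
    obtain ⟨x, -, -, hx⟩ := hr.exists_lower_of_level huv (by omega)
    omega
  | succ k ih =>
    have lower : ∀ v u, J.Adj v u → r v = k + 1 → r u + 1 = r v → c v u = f v - f u := by
      intro v u hvu hv hu
      obtain ⟨u₀, hu₀, hru₀, hfv⟩ := hf v (by omega)
      exact hc.eq_sub_of_lower hr ih hv hu₀ hru₀ hfv hvu hu
    intro u v huv hu hv
    have huv_le := hr.rank_le huv
    have hvu_le := hr.rank_le huv.symm
    rcases le_or_gt (max (r u) (r v)) k with hk | hk
    · exact ih u v huv (by omega) (by omega)
    rcases lt_trichotomy (r u) (r v) with h | h | h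
    · rw [hc.antisymm huv, lower v u huv.symm (by omega) (by omega), neg_sub]
    · obtain ⟨x, hux, hvx, hrx⟩ := hr.exists_lower_of_level huv h
      rw [← hc.triangle hux hvx.symm huv, hc.antisymm hvx.symm, lower u x hux (by omega) hrx,
        lower v x hvx (by omega) (by omega), neg_sub, sub_add_sub_cancel]
    · exact lower u v huv (by omega) (by omega)

end Cocycles

section Johnson

variable {α : Type*} [DecidableEq α] {m : ℕ}

lemma card_insert_erase {T : Finset α} {x y : α} (hx : x ∈ T) (hy : y ∉ T) :
    #(insert y (T.erase x)) = #T := by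
  rw [card_insert_of_notMem fun h => hy (mem_of_mem_erase h), card_erase_add_one hx]

lemma card_insert_erase_sdiff {T : Finset α} (S : Finset α) {x y : α} (hx : x ∈ T) (hy : y ∉ T) :
    #(insert y (T.erase x) \ S) + (if x ∈ S then 0 else 1) =
      #(T \ S) + (if y ∈ S then 0 else 1) := by
  have hinsert : #(insert y (T.erase x) \ S) =
      #((T \ S).erase x) + (if y ∈ S then 0 else 1) := by
    split_ifs with h
    · rw [insert_sdiff_of_mem _ h, erase_sdiff_comm, add_zero]
    · rw [insert_sdiff_of_notMem _ h, erase_sdiff_comm,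
        card_insert_of_notMem fun hy' => hy (mem_sdiff.1 (mem_of_mem_erase hy')).1]
  have herase : #((T \ S).erase x) + (if x ∈ S then 0 else 1) = #(T \ S) := by
    split_ifs with h
    · rw [erase_eq_of_notMem fun hx' => (mem_sdiff.1 hx').2 h, add_zero]
    · exact card_erase_add_one (mem_sdiff.2 ⟨hx, h⟩)
  omega

/-- The subset obtained from `T` by replacing `x ∈ T` with `y ∉ T`. -/
def exchange (T : Set.powersetCard α m) {x y : α} (hx : x ∈ T) (hy : y ∉ T) :
    Set.powersetCard α m :=
  ⟨insert y (T.1.erase x), (card_insert_erase hx hy).trans T.2⟩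

lemma mem_exchange {T : Set.powersetCard α m} {x y a : α} {hx : x ∈ T} {hy : y ∉ T} :
    a ∈ exchange T hx hy ↔ a = y ∨ a ≠ x ∧ a ∈ T := by
  rw [← Set.powersetCard.mem_coe_iff, exchange, mem_insert, mem_erase, Set.powersetCard.mem_coe_iff]

/-- The Johnson graph: `m`-subsets of `α` are adjacent when one arises from the other by exchanging
a single element. -/
def johnsonGraph (α : Type*) [DecidableEq α] (m : ℕ) : SimpleGraph (Set.powersetCard α m) where
  Adj T T' := ∃ (x y : α) (hx : x ∈ T) (hy : y ∉ T), T' = exchange T hx hy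
  symm := ⟨by
    rintro T _ ⟨x, y, hx, hy, rfl⟩
    refine ⟨y, x, mem_exchange.2 (by grind), fun h => ?_, SetLike.ext fun a => ?_⟩ <;>
      grind [mem_exchange]⟩
  loopless := ⟨by
    rintro T ⟨x, y, hx, hy, h⟩
    exact hy (h ▸ mem_exchange.2 (Or.inl rfl))⟩

section Exchange

variable {S T : Set.powersetCard α m} {x x' y y' : α}

lemma johnsonGraph_adj_exchange (hx : x ∈ T) (hy : y ∉ T) :
    (johnsonGraph α m).Adj T (exchange T hx hy) := ⟨x, y, hx, hy, rfl⟩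

lemma johnsonGraph_adj_exchange_right (hx : x ∈ T) (hy : y ∉ T) (hy' : y' ∉ T) (hne : y ≠ y') :
    (johnsonGraph α m).Adj (exchange T hx hy) (exchange T hx hy') :=
  ⟨y, y', by grind [mem_exchange], by grind [mem_exchange],
    SetLike.ext fun a => by grind [mem_exchange]⟩

lemma johnsonGraph_adj_exchange_left (hx : x ∈ T) (hx' : x' ∈ T) (hy : y ∉ T) (hne : x ≠ x') :
    (johnsonGraph α m).Adj (exchange T hx hy) (exchange T hx' hy) :=
  ⟨x', x, by grind [mem_exchange], by grind [mem_exchange],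
    SetLike.ext fun a => by grind [mem_exchange]⟩

lemma eq_exchange_of_triangle (hx : x ∈ S) (hy : y ∉ S) (hT : (johnsonGraph α m).Adj S T)
    (hT' : (johnsonGraph α m).Adj (exchange S hx hy) T) :
    (∃ (u : α) (hu : u ∈ S), u ≠ x ∧ T = exchange S hu hy) ∨
      ∃ (u : α) (hu : u ∉ S), u ≠ y ∧ T = exchange S hx hu := by
  obtain ⟨p, q, hp, hq, rfl⟩ := hT
  rcases eq_or_ne p x with rfl | hpx
  · exact Or.inr ⟨q, hq, by rintro rfl; exact hT'.ne rfl, rfl⟩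
  rcases eq_or_ne q y with rfl | hqy
  · exact Or.inl ⟨p, hp, hpx, rfl⟩
  obtain ⟨a, b, ha, hb, h⟩ := hT'
  have hmem := fun z => SetLike.ext_iff.1 h z
  simp only [mem_exchange] at hmem
  have hxb : x = b := by grind
  have hqb : q = b := by grind
  exact absurd (hxb.trans hqb.symm ▸ hx) hq

lemma card_exchange_sdiff (hx : x ∈ T) (hy : y ∉ T) :
    #((exchange T hx hy).1 \ S.1) + (if x ∈ S.1 then 0 else 1) =
      #(T.1 \ S.1) + (if y ∈ S.1 then 0 else 1) :=
  card_insert_erase_sdiff S.1 hx hy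

lemma card_exchange_sdiff_add_one_iff (hx : x ∈ T) (hy : y ∉ T) :
    #((exchange T hx hy).1 \ S.1) + 1 = #(T.1 \ S.1) ↔ x ∉ S ∧ y ∈ S := by
  have := card_exchange_sdiff (S := S) hx hy
  simp only [← Set.powersetCard.mem_coe_iff]
  split_ifs at this <;> grind

lemma card_exchange_sdiff_eq_iff (hx : x ∈ T) (hy : y ∉ T) :
    #((exchange T hx hy).1 \ S.1) = #(T.1 \ S.1) ↔ (x ∈ S ↔ y ∈ S) := by
  have := card_exchange_sdiff (S := S) hx hy
  simp only [← Set.powersetCard.mem_coe_iff]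
  split_ifs at this <;> grind

lemma exists_adj_lower_of_card_sdiff_eq {U : Set.powersetCard α m}
    (hU : (johnsonGraph α m).Adj T U) (hr : #(T.1 \ S.1) = #(U.1 \ S.1)) :
    ∃ T', (johnsonGraph α m).Adj T T' ∧ (johnsonGraph α m).Adj U T' ∧
      #(T'.1 \ S.1) + 1 = #(T.1 \ S.1) := by
  obtain ⟨x, y, hx, hy, rfl⟩ := hU
  have hxy := (card_exchange_sdiff_eq_iff hx hy).1 hr.symm
  have hST : S ≠ T := by
    rintro rfl
    exact hy (hxy.1 hx)
  by_cases hxS : x ∈ S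
  · obtain ⟨a, haT, haS⟩ := (Set.powersetCard.exists_mem_notMem_iff_ne T S).1 hST.symm
    exact ⟨exchange T haT hy, johnsonGraph_adj_exchange haT hy,
      johnsonGraph_adj_exchange_left hx haT hy (ne_of_mem_of_not_mem hxS haS),
      (card_exchange_sdiff_add_one_iff haT hy).2 ⟨haS, hxy.1 hxS⟩⟩
  · obtain ⟨b, hbS, hbT⟩ := (Set.powersetCard.exists_mem_notMem_iff_ne S T).1 hST
    exact ⟨exchange T hx hbT, johnsonGraph_adj_exchange hx hbT,
      johnsonGraph_adj_exchange_right hx hy hbT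
        (ne_of_mem_of_not_mem hbS (mt hxy.2 hxS)).symm,
      (card_exchange_sdiff_add_one_iff hx hbT).2 ⟨hxS, hbS⟩⟩

end Exchange

/-- Peeling by the distance to a fixed subset `S`. -/
lemma isPeelable_johnsonGraph (S : Set.powersetCard α m) :
    IsPeelable (johnsonGraph α m) fun T => #(T.1 \ S.1) where
  rank_le := by
    rintro T U hTU
    obtain ⟨x, y, hx, hy, rfl⟩ := hTU
    have := card_exchange_sdiff (S := S) hx hy
    split_ifs at this <;> omega
  exists_lower := by
    intro T h
    obtain ⟨a, ha⟩ := card_pos.1 h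
    obtain ⟨haT, haS⟩ := mem_sdiff.1 ha
    have hST : S ≠ T := by
      rintro rfl
      exact haS haT
    obtain ⟨b, hbS, hbT⟩ := (Set.powersetCard.exists_mem_notMem_iff_ne S T).1 hST
    exact ⟨exchange T haT hbT, johnsonGraph_adj_exchange haT hbT,
      (card_exchange_sdiff_add_one_iff haT hbT).2 ⟨haS, hbS⟩⟩
  exists_lower_of_lower := by
    intro T U U' hU hU' hr hr'
    obtain ⟨x, y, hx, hy, rfl⟩ := hU
    obtain ⟨x', y', hx', hy', rfl⟩ := hU'
    obtain ⟨hxS, -⟩ := (card_exchange_sdiff_add_one_iff hx hy).1 hr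
    obtain ⟨-, hyS'⟩ := (card_exchange_sdiff_add_one_iff hx' hy').1 hr'
    exact ⟨exchange T hx hy', johnsonGraph_adj_exchange hx hy',
      (card_exchange_sdiff_add_one_iff hx hy').2 ⟨hxS, hyS'⟩,
      (eq_or_ne y' y).imp (by rintro rfl; rfl) (johnsonGraph_adj_exchange_right hx hy' hy),
      (eq_or_ne x x').imp (by rintro rfl; rfl) (johnsonGraph_adj_exchange_left hx hx' hy')⟩
  exists_lower_of_level _ _ := exists_adj_lower_of_card_sdiff_eq

theorem exists_potential_johnsonGraph {A : Type*} [AddCommGroup A]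
    {c : Set.powersetCard α m → Set.powersetCard α m → A}
    (hc : IsTriangleCocycle (johnsonGraph α m) c) :
    ∃ f : Set.powersetCard α m → A, ∀ T T', (johnsonGraph α m).Adj T T' → c T T' = f T - f T' := by
  rcases isEmpty_or_nonempty (Set.powersetCard α m) with h | ⟨⟨S⟩⟩
  · exact ⟨0, fun T => h.elim T⟩
  · exact hc.exists_potential (isPeelable_johnsonGraph S)

end Johnson

/-! ### Cocycles attached to an edge -/

section EdgeCocycle

open scoped Pointwise

variable {α : Type*} [DecidableEq α] {m : ℕ} {L : Set.powersetCard α m} {i j : α}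

lemma mem_smul_powersetCard {w : Perm α} {a : α} : a ∈ w • L ↔ w⁻¹ a ∈ L := by
  rw [← Set.powersetCard.mem_coe_iff, Set.powersetCard.coe_smul, ← Finset.inv_smul_mem_iff,
    Perm.smul_def, Set.powersetCard.mem_coe_iff]

lemma apply_mem_smul_powersetCard {w : Perm α} {a : α} : w a ∈ w • L ↔ a ∈ L := by
  rw [mem_smul_powersetCard, Perm.inv_def, symm_apply_apply]

lemma swap_smul_powersetCard {a b : α} (hab : a ∈ L ↔ b ∈ L) : swap a b • L = L := by
  refine SetLike.ext fun x => ?_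
  rw [mem_smul_powersetCard, swap_inv, swap_apply_def]
  split_ifs with hxa hxb
  · rw [hxa, hab]
  · rw [hxb, hab]
  · rfl

lemma swap_smul_eq_exchange (hi : i ∈ L) (hj : j ∉ L) : swap i j • L = exchange L hi hj := by
  refine SetLike.ext fun x => ?_
  rw [mem_smul_powersetCard, swap_inv, swap_apply_def, mem_exchange]
  grind

lemma smul_exchange (w : Perm α) (hi : i ∈ L) (hj : j ∉ L) :
    w • exchange L hi hj = exchange (w • L) (apply_mem_smul_powersetCard.2 hi)
      (mt apply_mem_smul_powersetCard.1 hj) := by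
  refine SetLike.ext fun x => ?_
  refine mem_smul_powersetCard.trans ?_
  rw [mem_exchange, mem_exchange, mem_smul_powersetCard, Perm.inv_eq_iff_eq, Ne,
    Perm.inv_eq_iff_eq]

lemma exists_smul_eq_and_apply_eq [Finite α] (hi : i ∈ L) (hj : j ∉ L) {T : Set.powersetCard α m}
    {x y : α} (hx : x ∈ T) (hy : y ∉ T) : ∃ w : Perm α, w • L = T ∧ w i = x ∧ w j = y := by
  have := Set.powersetCard.isPretransitive (α := α) (n := m)
  obtain ⟨w, rfl⟩ := MulAction.exists_smul_eq (Perm α) L T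
  rw [mem_smul_powersetCard] at hx hy
  refine ⟨w * swap i (w⁻¹ x) * swap j (w⁻¹ y), ?_, ?_, ?_⟩
  · rw [mul_smul, swap_smul_powersetCard (iff_of_false hj hy), mul_smul,
      swap_smul_powersetCard (iff_of_true hi hx)]
  · rw [Perm.mul_apply, swap_apply_of_ne_of_ne (ne_of_mem_of_not_mem hi hj)
      (ne_of_mem_of_not_mem hi hy), Perm.mul_apply, swap_apply_left]
    exact w.apply_symm_apply x
  · rw [Perm.mul_apply, swap_apply_left, Perm.mul_apply, swap_apply_of_ne_of_ne
      (ne_of_mem_of_not_mem hi hy).symm (ne_of_mem_of_not_mem hx hy).symm]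
    exact w.apply_symm_apply y

lemma johnsonGraph_adj_iff_exists_smul [Finite α] (hi : i ∈ L) (hj : j ∉ L)
    {T T' : Set.powersetCard α m} :
    (johnsonGraph α m).Adj T T' ↔ ∃ w : Perm α, w • L = T ∧ (w * swap i j) • L = T' := by
  constructor
  · rintro ⟨x, y, hx, hy, rfl⟩
    obtain ⟨w, rfl, rfl, rfl⟩ := exists_smul_eq_and_apply_eq hi hj hx hy
    exact ⟨w, rfl, by rw [mul_smul, swap_smul_eq_exchange hi hj, smul_exchange]⟩
  · rintro ⟨w, rfl, rfl⟩
    rw [mul_smul, swap_smul_eq_exchange hi hj, smul_exchange]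
    exact johnsonGraph_adj_exchange _ _

lemma mul_swap_mul_swap_smul_of_mem (w : Perm α) (hi : i ∈ L) (hj : j ∉ L) {u : α} (hu : u ∈ L) :
    (w * swap i u * swap i j) • L = exchange (w • L) (apply_mem_smul_powersetCard.2 hu)
      (mt apply_mem_smul_powersetCard.1 hj) := by
  refine SetLike.ext fun x => ?_
  obtain ⟨z, rfl⟩ := w.surjective x
  rw [mem_exchange, apply_mem_smul_powersetCard, mul_assoc, mul_smul, apply_mem_smul_powersetCard,
    w.apply_eq_iff_eq, Ne, w.apply_eq_iff_eq, mul_smul, swap_smul_eq_exchange hi hj,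
    mem_smul_powersetCard, swap_inv, swap_apply_def, mem_exchange]
  grind

lemma mul_swap_mul_swap_smul_of_notMem (w : Perm α) (hi : i ∈ L) (hj : j ∉ L) {u : α}
    (hu : u ∉ L) :
    (w * swap j u * swap i j) • L = exchange (w • L) (apply_mem_smul_powersetCard.2 hi)
      (mt apply_mem_smul_powersetCard.1 hu) := by
  refine SetLike.ext fun x => ?_
  obtain ⟨z, rfl⟩ := w.surjective x
  rw [mem_exchange, apply_mem_smul_powersetCard, mul_assoc, mul_smul, apply_mem_smul_powersetCard,
    w.apply_eq_iff_eq, Ne, w.apply_eq_iff_eq, mul_smul, swap_smul_eq_exchange hi hj,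
    mem_smul_powersetCard, swap_inv, swap_apply_def, mem_exchange]
  grind

lemma exists_smul_eq_of_triangle (hi : i ∈ L) (hj : j ∉ L) {w : Perm α}
    {T : Set.powersetCard α m} (h₁ : (johnsonGraph α m).Adj (w • L) T)
    (h₂ : (johnsonGraph α m).Adj ((w * swap i j) • L) T) :
    (∃ u ∈ L, u ≠ i ∧ (w * swap i u * swap i j) • L = T) ∨
      ∃ u ∉ L, u ≠ j ∧ (w * swap j u * swap i j) • L = T := by
  rw [mul_smul, swap_smul_eq_exchange hi hj, smul_exchange] at h₂
  rcases eq_exchange_of_triangle _ _ h₁ h₂ with ⟨y, hy, hne, rfl⟩ | ⟨y, hy, hne, rfl⟩ <;>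
    obtain ⟨u, rfl⟩ := w.surjective y <;> rw [apply_mem_smul_powersetCard] at hy
  · exact Or.inl ⟨u, hy, fun h => hne (h ▸ rfl), mul_swap_mul_swap_smul_of_mem w hi hj hy⟩
  · exact Or.inr ⟨u, hy, fun h => hne (h ▸ rfl), mul_swap_mul_swap_smul_of_notMem w hi hj hy⟩

variable {A : Type*} [AddCommGroup A] {D : Perm α → A}

/-- The properties of the jump `D = rightDiff (swap i j) (b i)` across an edge `ij` that separates
the vertex set `L ∋ i` from its complement. They say exactly that `D w` is a 1-cocycle of the clique
complex of a Johnson graph evaluated on the edge from `w • L` to `(w * swap i j) • L`. -/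
structure IsEdgeCocycle (L : Set.powersetCard α m) (i j : α) (D : Perm α → A) : Prop where
  antisymm : ∀ w, D (w * swap i j) = -D w
  invariant : ∀ ⦃y z⦄, y ≠ i → y ≠ j → z ≠ i → z ≠ j → (y ∈ L ↔ z ∈ L) → swap y z ∈ rightPeriods D
  triangle_of_mem : ∀ ⦃u⦄, u ∈ L → u ≠ i →
    ∀ w, D w + D (w * swap i j * swap i u) = D (w * swap i u)
  triangle_of_notMem : ∀ ⦃u⦄, u ∉ L → u ≠ j →
    ∀ w, D w + D (w * swap i j * swap j u) = D (w * swap j u)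

namespace IsEdgeCocycle

lemma mem_rightPeriods_of_smul_eq [Finite α] (hD : IsEdgeCocycle L i j D) (hi : i ∈ L) (hj : j ∉ L)
    {σ : Perm α} (hσ : σ • L = L) (hσ' : (σ * swap i j) • L = swap i j • L) :
    σ ∈ rightPeriods D := by
  have hL : ∀ x, σ x ∈ L ↔ x ∈ L := fun x => by
    conv_lhs => rw [← hσ, apply_mem_smul_powersetCard]
  have hL' : ∀ x, σ x ∈ exchange L hi hj ↔ x ∈ exchange L hi hj := fun x => by
    conv_lhs => rw [← swap_smul_eq_exchange hi hj, ← hσ', mul_smul, apply_mem_smul_powersetCard,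
      swap_smul_eq_exchange hi hj]
  simp only [mem_exchange] at hL'
  have hij : i ≠ j := ne_of_mem_of_not_mem hi hj
  have hfix : ∀ x, (σ x = i ↔ x = i) ∧ (σ x = j ↔ x = j) := by grind
  refine mem_of_forall_swap_mem fun x => ?_
  by_cases hx : x = i ∨ x = j
  · have hσx : σ x = x := by grind
    rw [hσx, swap_self]
    exact one_mem _
  · rw [not_or] at hx
    exact hD.invariant hx.1 hx.2 (mt (hfix x).1.1 hx.1) (mt (hfix x).2.1 hx.2) (hL x).symm

lemma factorsThrough [Finite α] (hD : IsEdgeCocycle L i j D) (hi : i ∈ L) (hj : j ∉ L) :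
    D.FactorsThrough fun w => (w • L, (w * swap i j) • L) := by
  intro w w' h
  obtain ⟨h₁, h₂⟩ := Prod.mk.inj h
  have hmem : w'⁻¹ * w ∈ rightPeriods D := hD.mem_rightPeriods_of_smul_eq hi hj
    (by rw [mul_smul, h₁, inv_smul_smul])
    (by rw [mul_assoc, mul_smul, h₂, mul_smul, inv_smul_smul])
  rw [← hmem w', mul_inv_cancel_left]

lemma isTriangleCocycle [Finite α] (hD : IsEdgeCocycle L i j D) (hi : i ∈ L) (hj : j ∉ L)
    {c : Set.powersetCard α m → Set.powersetCard α m → A}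
    (hc : ∀ w : Perm α, c (w • L) ((w * swap i j) • L) = D w) :
    IsTriangleCocycle (johnsonGraph α m) c where
  antisymm := by
    intro T T' h
    obtain ⟨w, rfl, rfl⟩ := (johnsonGraph_adj_iff_exists_smul hi hj).1 h
    have hrev := hc (w * swap i j)
    rw [mul_swap_mul_self] at hrev
    rw [hc, hrev, hD.antisymm, neg_neg]
  triangle := by
    intro T T' U h h' hU
    obtain ⟨w, rfl, rfl⟩ := (johnsonGraph_adj_iff_exists_smul hi hj).1 h
    have hij : i ≠ j := ne_of_mem_of_not_mem hi hj
    have close : ∀ τ : Perm α, τ • L = L → swap i j * τ * swap i j = τ * swap i j * τ →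
        D w + D (w * swap i j * τ) = D (w * τ) →
        c (w • L) ((w * swap i j) • L) + c ((w * swap i j) • L) ((w * τ * swap i j) • L) =
          c (w • L) ((w * τ * swap i j) • L) := by
      intro τ hτ hbraid htri
      have hbraid' : (w * swap i j * τ * swap i j) • L = (w * τ * swap i j) • L := by
        rw [mul_assoc, mul_assoc w, ← mul_assoc (swap i j), hbraid, ← mul_assoc, mul_smul _ τ, hτ,
          ← mul_assoc]
      have h₁ := hc (w * swap i j * τ)
      have h₂ := hc (w * τ)
      rw [hbraid', mul_smul _ τ, hτ] at h₁
      rw [mul_smul _ τ, hτ] at h₂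
      rw [hc, h₁, h₂, htri]
    rcases exists_smul_eq_of_triangle hi hj hU h' with ⟨u, hu, hui, rfl⟩ | ⟨u, hu, huj, rfl⟩
    · exact close _ (swap_smul_powersetCard (iff_of_true hi hu))
        (swap_braid hij hui (ne_of_mem_of_not_mem hu hj)) (hD.triangle_of_mem hu hui w)
    · have hbraid := swap_braid hij.symm huj (ne_of_mem_of_not_mem hi hu).symm
      rw [swap_comm j i] at hbraid
      exact close _ (swap_smul_powersetCard (iff_of_false hj hu)) hbraid
        (hD.triangle_of_notMem hu huj w)

theorem exists_potential [Finite α] (hD : IsEdgeCocycle L i j D) (hi : i ∈ L) (hj : j ∉ L) :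
    ∃ f : Set.powersetCard α m → A, ∀ w : Perm α, D w = f (w • L) - f ((w * swap i j) • L) := by
  have hfactors := hD.factorsThrough hi hj
  let c := Function.curry
    (Function.extend (fun w : Perm α => (w • L, (w * swap i j) • L)) D (fun _ => 0))
  have hc : ∀ w : Perm α, c (w • L) ((w * swap i j) • L) = D w :=
    hfactors.extend_apply (fun _ => 0)
  obtain ⟨f, hf⟩ := exists_potential_johnsonGraph (hD.isTriangleCocycle hi hj hc)
  refine ⟨f, fun w => ?_⟩
  rw [← hf _ _ ((johnsonGraph_adj_iff_exists_smul hi hj).2 ⟨w, rfl, rfl⟩), hc]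

end IsEdgeCocycle

end EdgeCocycle

/-! ### Potentials for the jumps of a linear spline -/

section Potential

lemma IsEdgeCocycle.of_rightPeriods {α A : Type*} [DecidableEq α] [AddCommGroup A] {m : ℕ}
    {L : Set.powersetCard α m} {i j : α} {F F' : Perm α → A} (hi : i ∈ L) (hj : j ∉ L)
    (hF : ∀ y ∉ L, ∀ z ∉ L, swap y z ∈ rightPeriods F)
    (hF' : ∀ y ∈ L, ∀ z ∈ L, swap y z ∈ rightPeriods F')
    (hneg : rightDiff (swap i j) F = -rightDiff (swap i j) F') :
    IsEdgeCocycle L i j (rightDiff (swap i j) F) where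
  antisymm := rightDiff_mul_self (swap_mul_self i j) F
  invariant := by
    intro y z hyi hyj hzi hzj hyz
    have hc := commute_swap_swap hyi hyj hzi hzj
    by_cases hy : y ∈ L
    · have hper := mem_rightPeriods_rightDiff (hF' y hy z (hyz.1 hy)) hc
      intro w
      rw [hneg, Pi.neg_apply, hper, Pi.neg_apply]
    · exact mem_rightPeriods_rightDiff (hF y hy z (mt hyz.2 hy)) hc
  triangle_of_mem := by
    intro u hu hui w
    have htri := rightDiff_triangle (hF' i hi u hu)
      (swap_braid (ne_of_mem_of_not_mem hi hj) hui (ne_of_mem_of_not_mem hu hj)) w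
    simp only [hneg, Pi.neg_apply, ← htri, neg_add]
  triangle_of_notMem := by
    intro u hu huj w
    refine rightDiff_triangle (hF j hj u hu) ?_ w
    rw [swap_comm i j]
    exact swap_braid (ne_of_mem_of_not_mem hi hj).symm huj (ne_of_mem_of_not_mem hi hu).symm

variable {n : ℕ} {R : Type*} [CommRing R] {Γ : SimpleGraph (Fin n)} {B : Set (Fin n)}
  {b : Fin n → Perm (Fin n) → R} {i j k p u v : Fin n}

lemma swap_mem_rightPeriods_of_reachAvoid (hb : b ∈ coeffSpace R Γ) (h : ReachAvoid Γ p u v) :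
    swap u v ∈ rightPeriods (b p) :=
  swap_mem_of_reachable (fun x y hxy =>
    have h' := delVertexEdges_adj.1 hxy
    (hb x y h'.1).1 p h'.2.1.symm h'.2.2.symm) h

lemma rightDiff_swap_eq_neg (hb : b ∈ coeffSpace R Γ) (hij : Γ.Adj i j) :
    rightDiff (swap i j) (b i) = -rightDiff (swap i j) (b j) := by
  rw [eq_neg_iff_add_eq_zero, ← rightDiff_add, rightDiff_eq_zero_iff]
  exact (hb i j hij).2

theorem exists_cutEdge_potential (hΓ : Γ.Connected) (hb : b ∈ coeffSpace R Γ)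
    (hc : IsCutEdge Γ i j) {m : ℕ} {L : Set.powersetCard (Fin n) m}
    (hL : (L : Set (Fin n)) = cutSide Γ i j) :
    ∃ f : Set.powersetCard (Fin n) m → R,
      ∀ w : Perm (Fin n), rightDiff (swap i j) (b i) w = f (w • L) - f ((w * swap i j) • L) := by
  have hmem : ∀ u, u ∈ L ↔ u ∈ cutSide Γ i j := fun u => by rw [← hL, SetLike.mem_coe]
  have hnotMem : ∀ u, u ∉ L ↔ u ∈ cutSide Γ j i := fun u => by
    rw [hmem, ← compl_cutSide hΓ hc, Set.mem_compl_iff]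
  have hc' : IsCutEdge Γ j i := ⟨hc.1.symm, Sym2.eq_swap (a := i) ▸ hc.2⟩
  have hi : i ∈ L := (hmem i).2 (SimpleGraph.Reachable.refl _)
  have hj : j ∉ L := (hnotMem j).2 (SimpleGraph.Reachable.refl _)
  refine IsEdgeCocycle.exists_potential (IsEdgeCocycle.of_rightPeriods hi hj ?_ ?_
    (rightDiff_swap_eq_neg hb hc.1)) hi hj
  · exact fun y hy z hz => swap_mem_rightPeriods_of_reachAvoid hb <|
      (reachAvoid_of_mem_cutSide hΓ hc' ((hnotMem y).1 hy)).trans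
        (reachAvoid_of_mem_cutSide hΓ hc' ((hnotMem z).1 hz)).symm
  · exact fun y hy z hz => swap_mem_rightPeriods_of_reachAvoid hb <|
      (reachAvoid_of_mem_cutSide hΓ hc ((hmem y).1 hy)).trans
        (reachAvoid_of_mem_cutSide hΓ hc ((hmem z).1 hz)).symm

lemma swap_mem_rightPeriods_of_mem (hB : IsInsepClass Γ B) (hb : b ∈ coeffSpace R Γ) (hu : u ∈ B)
    (hv : v ∈ B) (hup : u ≠ p) (hvp : v ≠ p) : swap u v ∈ rightPeriods (b p) :=
  swap_mem_rightPeriods_of_reachAvoid hb (hB.insep u hu v hv p hup.symm hvp.symm)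

lemma swap_mem_rightPeriods_rightDiff (hΓ : Γ.Connected) (hB : IsInsepClass Γ B)
    (hb : b ∈ coeffSpace R Γ) (hi : i ∈ B) (hj : j ∈ B) (hk : k ∈ B) (hij : Γ.Adj i j)
    (hki : k ≠ i) (hkj : k ≠ j) (hui : u ≠ i) (huj : u ≠ j) :
    swap u k ∈ rightPeriods (rightDiff (swap i j) (b i)) := by
  have hc := commute_swap_swap hui huj hki hkj
  rcases ReachAvoid.or_reachAvoid hΓ hij.ne u with hu | hu
  · exact mem_rightPeriods_rightDiff (swap_mem_rightPeriods_of_reachAvoid hb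
      (hu.trans (hB.insep j hj k hk i hij.ne hki.symm))) hc
  · have hper := mem_rightPeriods_rightDiff (swap_mem_rightPeriods_of_reachAvoid hb
      (hu.trans (hB.insep i hi k hk j hij.ne' hkj.symm))) hc
    intro w
    rw [rightDiff_swap_eq_neg hb hij, Pi.neg_apply, hper, Pi.neg_apply]

lemma mem_ofSingleton {α : Type*} {x y : α} : x ∈ Set.powersetCard.ofSingleton y ↔ x = y :=
  Finset.mem_singleton

lemma isEdgeCocycle_ofSingleton (hΓ : Γ.Connected) (hB : IsInsepClass Γ B)
    (hb : b ∈ coeffSpace R Γ) (hi : i ∈ B) (hj : j ∈ B) (hk : k ∈ B) (hij : Γ.Adj i j)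
    (hki : k ≠ i) (hkj : k ≠ j) :
    IsEdgeCocycle (Set.powersetCard.ofSingleton i) i j (rightDiff (swap i j) (b i)) where
  antisymm := rightDiff_mul_self (swap_mul_self i j) _
  invariant := by
    intro y z hyi hyj hzi hzj _
    have hper := fun {u} => swap_mem_rightPeriods_rightDiff (u := u) hΓ hB hb hi hj hk hij hki hkj
    exact SubmonoidClass.swap_mem_trans _ (hper hyi hyj) (swap_comm z k ▸ hper hzi hzj)
  triangle_of_mem := fun u hu hui => (hui (mem_ofSingleton.1 hu)).elim
  triangle_of_notMem := by
    intro u hu huj w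
    rw [mem_ofSingleton] at hu
    have hbraid : swap i j * swap j k * swap i j = swap j k * swap i j * swap j k := by
      rw [swap_comm i j]
      exact swap_braid hij.ne' hkj hki
    have htri := rightDiff_triangle (s := swap i j)
      (swap_mem_rightPeriods_of_mem hB hb hj hk hij.ne' hki) hbraid
    have hconj : swap u k * swap j k * (swap u k)⁻¹ = swap j u := by
      rw [mul_swap_eq_swap_mul, mul_inv_cancel_right, swap_apply_right,
        swap_apply_of_ne_of_ne huj.symm hkj.symm]
    rw [← hconj]
    exact triangle_conj (swap_mem_rightPeriods_rightDiff hΓ hB hb hi hj hk hij hki hkj hu huj)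
      (commute_swap_swap hu huj hki hkj) htri w

lemma exists_edge_potential (hΓ : Γ.Connected) (hB : IsInsepClass Γ B) (hb : b ∈ coeffSpace R Γ)
    (hi : i ∈ B) (hj : j ∈ B) (hcard : 2 < B.ncard) (hij : Γ.Adj i j) :
    ∃ x : Fin n → R, ∀ w, rightDiff (swap i j) (b i) w = x (w i) - x (w j) := by
  obtain ⟨k, hk, hkij⟩ := Set.exists_mem_notMem_of_ncard_lt_ncard
    ((Set.ncard_pair hij.ne).trans_lt hcard)
  simp only [Set.mem_insert_iff, Set.mem_singleton_iff, not_or] at hkij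
  obtain ⟨f, hf⟩ := (isEdgeCocycle_ofSingleton hΓ hB hb hi hj hk hij hkij.1 hkij.2).exists_potential
    (mem_ofSingleton.2 rfl) (mt mem_ofSingleton.1 hij.ne')
  have hsmul : ∀ w : Perm (Fin n),
      w • Set.powersetCard.ofSingleton i = Set.powersetCard.ofSingleton (w i) := fun w =>
    SetLike.ext fun x => by
      rw [mem_ofSingleton]
      exact mem_smul_powersetCard.trans (mem_ofSingleton.trans w.symm_apply_eq)
  refine ⟨f ∘ Set.powersetCard.ofSingleton, fun w => ?_⟩
  rw [hf, hsmul, hsmul, Perm.mul_apply, swap_apply_left]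
  rfl

lemma rightDiff_swap_of_mem (hB : IsInsepClass Γ B) (hb : b ∈ coeffSpace R Γ) {x : Fin n → R}
    (hj : j ∈ B) (hk : k ∈ B) (hij : i ≠ j)
    (hx : ∀ w, rightDiff (swap i j) (b i) w = x (w i) - x (w j)) (w : Perm (Fin n)) :
    rightDiff (swap i k) (b i) w = x (w i) - x (w k) := by
  rcases eq_or_ne k i with rfl | hki
  · rw [rightDiff, swap_self, sub_self]
    exact sub_self _
  rcases eq_or_ne k j with rfl | -
  · exact hx w
  have hper := swap_mem_rightPeriods_of_mem hB hb hj hk hij.symm hki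
  have hconj : swap i k = swap j k * swap i j * swap j k := by
    rw [swap_mul_swap_mul_swap hij hki.symm, swap_comm]
  have hxj := hx (w * swap j k)
  rw [rightDiff, hper, Perm.mul_apply, Perm.mul_apply, swap_apply_left,
    swap_apply_of_ne_of_ne hij hki.symm] at hxj
  rw [rightDiff, hconj, ← mul_assoc, hper, ← mul_assoc, hxj]

theorem exists_block_potential [Nontrivial (Fin n)] (hΓ : Γ.Connected) (hB : IsInsepClass Γ B)
    (hb : b ∈ coeffSpace R Γ) (hcard : 2 < B.ncard) :
    ∃ x : Fin n → R, ∀ i ∈ B, ∀ j ∈ B, ∀ w, rightDiff (swap i j) (b i) w = x (w i) - x (w j) := by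
  obtain ⟨i₀, hi₀, j₀, hj₀, hij₀⟩ := hB.exists_adj hΓ
  obtain ⟨x, hx⟩ := exists_edge_potential hΓ hB hb hi₀ hj₀ hcard hij₀
  have hbase : ∀ j ∈ B, ∀ w, rightDiff (swap i₀ j) (b i₀) w = x (w i₀) - x (w j) :=
    fun j hj => rightDiff_swap_of_mem hB hb hj₀ hj hij₀.ne hx
  suffices hwalk : ∀ {p q : B}, (Γ.induce B).Walk p q →
      (∀ j ∈ B, ∀ w, rightDiff (swap q.1 j) (b q) w = x (w q) - x (w j)) →
      ∀ j ∈ B, ∀ w, rightDiff (swap p.1 j) (b p) w = x (w p) - x (w j) by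
    refine ⟨x, fun i hi => ?_⟩
    obtain ⟨W⟩ := (hB.isBiconn hΓ).2.1.preconnected ⟨i, hi⟩ ⟨i₀, hi₀⟩
    exact hwalk W hbase
  intro p q W hq
  induction W with
  | nil => exact hq
  | @cons p q r hpq _ ih =>
    intro j hj
    have hadj : Γ.Adj p q := hpq
    refine rightDiff_swap_of_mem hB hb q.2 hj hadj.ne fun w => ?_
    rw [rightDiff_swap_eq_neg hb hadj, Pi.neg_apply, swap_comm, ih hq p p.2, neg_sub]

end Potential

/-! ### The dimension count -/

section LinearAlgebra

variable {K V : Type*} [DivisionRing K] [AddCommGroup V] [Module K V]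

lemma finrank_eq_add_sum_finrank_map {ι : Type*} [Fintype ι] {W : ι → Type*}
    [∀ i, AddCommGroup (W i)] [∀ i, Module K (W i)] {E N : Submodule K V} [FiniteDimensional K E]
    (δ : ∀ i, V →ₗ[K] W i) (hN : ∀ v, v ∈ N ↔ v ∈ E ∧ ∀ i, δ i v = 0)
    (hδ : ∀ i, ∀ v ∈ E, ∃ v' ∈ E, δ i v' = δ i v ∧ ∀ j, j ≠ i → δ j v' = 0) :
    Module.finrank K E = Module.finrank K N + ∑ i, Module.finrank K (E.map (δ i)) := by
  let Φ : E →ₗ[K] ∀ i, E.map (δ i) := LinearMap.pi fun i => (δ i).submoduleMap E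
  have hker : LinearMap.ker Φ = N.comap E.subtype := by
    ext v
    simp [Φ, funext_iff, Subtype.ext_iff, hN]
  have hsurj : Function.Surjective Φ := by
    intro y
    choose v hv hvy using fun i => (y i).2
    choose v' hv' hδv' hoff using fun i => hδ i (v i) (hv i)
    refine ⟨∑ i, ⟨v' i, hv' i⟩, funext fun i => Subtype.ext ?_⟩
    have hsum : (δ i) (∑ j, v' j) = δ i (v i) := by
      rw [map_sum, Finset.sum_eq_single i (fun j _ hji => hoff j i hji.symm) (by simp), hδv']
    simpa [Φ, hvy] using hsum
  have hNE : N ≤ E := fun v hv => ((hN v).1 hv).1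
  rw [← Φ.finrank_range_add_finrank_ker, hker, LinearMap.range_eq_top.2 hsurj, finrank_top,
    Module.finrank_pi_fintype, (Submodule.comapSubtypeEquivOfLe hNE).finrank_eq, add_comm]

lemma finrank_range_add_one_of_ker {T : Type*} [Fintype T] [Nonempty T] (φ : (T → K) →ₗ[K] V)
    (hφ : ∀ x, φ x = 0 ↔ ∀ a a', x a = x a') :
    Module.finrank K (LinearMap.range φ) + 1 = Fintype.card T := by
  have hker : LinearMap.ker φ = K ∙ (1 : T → K) := by
    ext x
    rw [LinearMap.mem_ker, hφ, Submodule.mem_span_singleton]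
    constructor
    · intro hx
      obtain ⟨a⟩ := ‹Nonempty T›
      exact ⟨x a, funext fun a' => by simp [hx a a']⟩
    · rintro ⟨c, rfl⟩ _ _
      rfl
  rw [← Module.finrank_fintype_fun_eq_card K, ← φ.finrank_range_add_finrank_ker, hker,
    finrank_span_singleton one_ne_zero]

end LinearAlgebra

section Jumps

variable {n : ℕ} {R : Type*} [CommRing R] {Γ : SimpleGraph (Fin n)} {B : Set (Fin n)}
  {b : Fin n → Perm (Fin n) → R} {i j : Fin n}

/-- The jumps `w ↦ b i w - b i (w * (i j))` of a coefficient family across the oriented edges `ij`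
inside a vertex set `B`. -/
def jumps (R : Type*) [CommRing R] (Γ : SimpleGraph (Fin n)) (B : Set (Fin n)) :
    (Fin n → Perm (Fin n) → R) →ₗ[R] ((Γ.induce B).Dart → Perm (Fin n) → R) where
  toFun b e := rightDiff (swap e.fst.1 e.snd.1) (b e.fst)
  map_add' _ _ := _root_.funext fun _ => rightDiff_add _ _ _
  map_smul' c b := by
    funext e w
    exact (smul_sub c (b e.fst w) (b e.fst (w * swap e.fst.1 e.snd.1))).symm

lemma jumps_eq_iff {b' : Fin n → Perm (Fin n) → R} : jumps R Γ B b = jumps R Γ B b' ↔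
    ∀ i ∈ B, ∀ j ∈ B, Γ.Adj i j → rightDiff (swap i j) (b i) = rightDiff (swap i j) (b' i) :=
  ⟨fun h i hi j hj hij => congrFun h ⟨(⟨i, hi⟩, ⟨j, hj⟩), hij⟩,
    fun h => _root_.funext fun e => h _ e.fst.2 _ e.snd.2 e.adj⟩

lemma jumps_eq_zero_iff : jumps R Γ B b = 0 ↔
    ∀ i ∈ B, ∀ j ∈ B, Γ.Adj i j → rightDiff (swap i j) (b i) = 0 := by
  rw [← map_zero (jumps R Γ B), jumps_eq_iff]
  simp only [Pi.zero_apply, rightDiff_zero]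

lemma apply_eq_apply_of_rightDiff_eq_zero (hΓ : Γ.Connected) (hb : b ∈ coeffSpace R Γ)
    (hzero : ∀ i j, Γ.Adj i j → rightDiff (swap i j) (b i) = 0) (p : Fin n)
    (w w' : Perm (Fin n)) : b p w = b p w' := by
  refine apply_eq_apply_of_connected hΓ (fun u v huv => ?_) w w'
  by_cases hpu : p = u
  · subst hpu
    exact rightDiff_eq_zero_iff.1 (hzero p v huv)
  by_cases hpv : p = v
  · subst hpv
    exact swap_comm p u ▸ rightDiff_eq_zero_iff.1 (hzero p u huv.symm)
  exact (hb u v huv).1 p hpu hpv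

lemma jumps_pair_eq_iff {b' : Fin n → Perm (Fin n) → R} (hb : b ∈ coeffSpace R Γ)
    (hb' : b' ∈ coeffSpace R Γ) (hij : Γ.Adj i j) :
    jumps R Γ {i, j} b = jumps R Γ {i, j} b' ↔
      rightDiff (swap i j) (b i) = rightDiff (swap i j) (b' i) := by
  refine jumps_eq_iff.trans ⟨fun h => h i (.inl rfl) j (.inr rfl) hij, fun h => ?_⟩
  rintro u (rfl | rfl) v (rfl | rfl) huv
  · exact (huv.ne rfl).elim
  · exact h
  · rw [swap_comm, ← neg_inj, ← rightDiff_swap_eq_neg hb hij, ← rightDiff_swap_eq_neg hb' hij, h]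
  · exact (huv.ne rfl).elim

/-- The family `θ` of linear spline coefficients models the jumps inside the block `B`: its members
have no other jumps, they realize all jumps inside `B` of coefficient families of linear splines,
and each potential in `T → R` is determined by its jumps up to a constant. -/
structure IsJumpModel {T : Type*} (Γ : SimpleGraph (Fin n)) (B : Set (Fin n))
    (θ : (T → R) →ₗ[R] (Fin n → Perm (Fin n) → R)) : Prop where
  mem_coeffSpace : ∀ x, θ x ∈ coeffSpace R Γ
  rightDiff_eq_zero : ∀ x i j, Γ.Adj i j → ¬ (i ∈ B ∧ j ∈ B) → rightDiff (swap i j) (θ x i) = 0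
  exists_jumps_eq : ∀ b ∈ coeffSpace R Γ, ∃ x, jumps R Γ B (θ x) = jumps R Γ B b
  jumps_apply_eq_zero_iff : ∀ x, jumps R Γ B (θ x) = 0 ↔ ∀ a a', x a = x a'

lemma IsJumpModel.finrank_map_jumps_add_one {K T : Type*} [Field K] [Fintype T] [Nonempty T]
    {θ : (T → K) →ₗ[K] (Fin n → Perm (Fin n) → K)} (hθ : IsJumpModel Γ B θ) :
    Module.finrank K ((coeffSpace K Γ).map (jumps K Γ B)) + 1 = Fintype.card T := by
  have hrange : (coeffSpace K Γ).map (jumps K Γ B) = LinearMap.range (jumps K Γ B ∘ₗ θ) := by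
    refine le_antisymm ?_ ?_
    · rintro _ ⟨b, hb, rfl⟩
      exact hθ.exists_jumps_eq b hb
    · rintro _ ⟨x, rfl⟩
      exact ⟨θ x, hθ.mem_coeffSpace x, rfl⟩
  rw [hrange]
  exact finrank_range_add_one_of_ker _ hθ.jumps_apply_eq_zero_iff

end Jumps

section CutFamily

variable {n m : ℕ} {R : Type*} [CommRing R] {Γ : SimpleGraph (Fin n)} {i j u v : Fin n}
  {L : Set.powersetCard (Fin n) m}

open scoped Pointwise

/-- The coefficient families with opposite coefficients `± f (w • L)` at the ends of the edge `ij`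
and none elsewhere. -/
def cutFamily (R : Type*) [CommRing R] (i j : Fin n) (L : Set.powersetCard (Fin n) m) :
    (Set.powersetCard (Fin n) m → R) →ₗ[R] (Fin n → Perm (Fin n) → R) :=
  LinearMap.pi fun p => LinearMap.pi fun w =>
    (Pi.single i 1 - Pi.single j 1 : Fin n → R) p • LinearMap.proj (w • L)

lemma cutFamily_apply (f : Set.powersetCard (Fin n) m → R) (p : Fin n) (w : Perm (Fin n)) :
    cutFamily R i j L f p w = (Pi.single i 1 - Pi.single j 1 : Fin n → R) p * f (w • L) := rfl

lemma mem_cutSide_iff_of_adj (huv : Γ.Adj u v)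
    (hne : ¬ (u ∈ ({i, j} : Set (Fin n)) ∧ v ∈ ({i, j} : Set (Fin n)))) :
    u ∈ cutSide Γ i j ↔ v ∈ cutSide Γ i j := by
  have hadj : (Γ.deleteEdges {s(i, j)}).Adj u v := by
    refine SimpleGraph.deleteEdges_adj.2 ⟨huv, fun h => hne ?_⟩
    rcases Sym2.eq_iff.1 h with ⟨rfl, rfl⟩ | ⟨rfl, rfl⟩
    · exact ⟨.inl rfl, .inr rfl⟩
    · exact ⟨.inr rfl, .inl rfl⟩
  exact ⟨fun h => h.trans hadj.reachable, fun h => h.trans hadj.symm.reachable⟩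

lemma swap_smul_of_coe_eq_cutSide (hL : (L : Set (Fin n)) = cutSide Γ i j) (huv : Γ.Adj u v)
    (hne : ¬ (u ∈ ({i, j} : Set (Fin n)) ∧ v ∈ ({i, j} : Set (Fin n)))) : swap u v • L = L :=
  swap_smul_powersetCard (by
    rw [← SetLike.mem_coe, ← SetLike.mem_coe, hL]
    exact mem_cutSide_iff_of_adj huv hne)

lemma swap_mem_rightPeriods_cutFamily (h : swap u v • L = L) (f : Set.powersetCard (Fin n) m → R)
    (p : Fin n) : swap u v ∈ rightPeriods (cutFamily R i j L f p) := fun w => by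
  rw [cutFamily_apply, cutFamily_apply, mul_smul, h]

lemma cutFamily_mem_coeffSpace (hij : i ≠ j) (hL : (L : Set (Fin n)) = cutSide Γ i j)
    (f : Set.powersetCard (Fin n) m → R) : cutFamily R i j L f ∈ coeffSpace R Γ := by
  have hzero : ∀ p, p ≠ i → p ≠ j → cutFamily R i j L f p = 0 := fun p hpi hpj => by
    funext w
    simp [cutFamily_apply, hpi, hpj]
  have hsum : cutFamily R i j L f i + cutFamily R i j L f j = 0 := by
    funext w
    simp [cutFamily_apply, hij, hij.symm]
  intro u v huv
  by_cases huv' : u ∈ ({i, j} : Set (Fin n)) ∧ v ∈ ({i, j} : Set (Fin n))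
  · obtain ⟨rfl | rfl, rfl | rfl⟩ := huv'
    · exact (huv.ne rfl).elim
    · exact ⟨fun p hpu hpv _ => by rw [hzero p hpu hpv]; rfl, fun _ => by rw [hsum]; rfl⟩
    · exact ⟨fun p hpu hpv _ => by rw [hzero p hpv hpu]; rfl,
        fun _ => by rw [add_comm, hsum]; rfl⟩
    · exact (huv.ne rfl).elim
  · have hper := swap_mem_rightPeriods_cutFamily (R := R) (i := i) (j := j)
      (swap_smul_of_coe_eq_cutSide hL huv huv') f
    exact ⟨fun p _ _ => hper p, fun w => congrArg₂ (· + ·) (hper u w) (hper v w)⟩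

lemma rightDiff_cutFamily (hij : i ≠ j) (f : Set.powersetCard (Fin n) m → R) (w : Perm (Fin n)) :
    rightDiff (swap i j) (cutFamily R i j L f i) w = f (w • L) - f ((w * swap i j) • L) := by
  simp only [rightDiff, cutFamily_apply, Pi.sub_apply, Pi.single_eq_same, Pi.single_eq_of_ne hij,
    sub_zero, one_mul]

lemma apply_eq_apply_of_forall_smul_eq {β : Type*} (hΓ : Γ.Connected)
    (hL : (L : Set (Fin n)) = cutSide Γ i j) {f : Set.powersetCard (Fin n) m → β}
    (hf : ∀ w : Perm (Fin n), f ((w * swap i j) • L) = f (w • L))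
    (T T' : Set.powersetCard (Fin n) m) : f T = f T' := by
  have hper : ∀ u v, Γ.Adj u v → swap u v ∈ rightPeriods fun w : Perm (Fin n) => f (w • L) := by
    intro u v huv
    by_cases huv' : u ∈ ({i, j} : Set (Fin n)) ∧ v ∈ ({i, j} : Set (Fin n))
    · obtain ⟨rfl | rfl, rfl | rfl⟩ := huv'
      · exact (huv.ne rfl).elim
      · exact hf
      · exact swap_comm v u ▸ hf
      · exact (huv.ne rfl).elim
    · exact fun w => congrArg f (by rw [mul_smul, swap_smul_of_coe_eq_cutSide hL huv huv'])
  have := Set.powersetCard.isPretransitive (α := Fin n) (n := m)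
  obtain ⟨w, rfl⟩ := MulAction.exists_smul_eq (Perm (Fin n)) L T
  obtain ⟨w', rfl⟩ := MulAction.exists_smul_eq (Perm (Fin n)) L T'
  exact apply_eq_apply_of_connected hΓ hper w w'

theorem isJumpModel_cutFamily (hΓ : Γ.Connected) (hc : IsCutEdge Γ i j)
    (hL : (L : Set (Fin n)) = cutSide Γ i j) : IsJumpModel Γ {i, j} (cutFamily R i j L) where
  mem_coeffSpace := cutFamily_mem_coeffSpace hc.1.ne hL
  rightDiff_eq_zero f u v huv hne := rightDiff_eq_zero_iff.2 <|
    swap_mem_rightPeriods_cutFamily (swap_smul_of_coe_eq_cutSide hL huv hne) f u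
  exists_jumps_eq b hb := by
    obtain ⟨f, hf⟩ := exists_cutEdge_potential hΓ hb hc hL
    refine ⟨f, (jumps_pair_eq_iff (cutFamily_mem_coeffSpace hc.1.ne hL f) hb hc.1).2 ?_⟩
    funext w
    rw [rightDiff_cutFamily hc.1.ne, hf]
  jumps_apply_eq_zero_iff f := by
    have hjumps : jumps R Γ {i, j} (cutFamily R i j L f) = 0 ↔
        rightDiff (swap i j) (cutFamily R i j L f i) = 0 := by
      rw [← map_zero (jumps R Γ {i, j}),
        jumps_pair_eq_iff (cutFamily_mem_coeffSpace hc.1.ne hL f) (zero_mem _) hc.1]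
      rw [Pi.zero_apply, rightDiff_zero]
    simp only [hjumps, funext_iff, rightDiff_cutFamily hc.1.ne, Pi.zero_apply, sub_eq_zero]
    exact ⟨fun h => apply_eq_apply_of_forall_smul_eq hΓ hL fun w => (h w).symm,
      fun h w => h _ _⟩

end CutFamily

section SumOver

variable {α R : Type*} [DecidableEq α] [CommRing R] {S : Finset α} {i j : α}

lemma swap_mem_rightPeriods_sum (h : i ∈ S ↔ j ∈ S) (x : α → R) :
    swap i j ∈ rightPeriods fun w : Perm α => ∑ u ∈ S, x (w u) := fun w =>
  sum_equiv (swap i j) (fun u => by rw [swap_apply_def]; split_ifs <;> simp_all) fun _ _ => rfl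

lemma rightDiff_swap_sum (hi : i ∈ S) (hj : j ∉ S) (x : α → R) (w : Perm α) :
    rightDiff (swap i j) (fun w : Perm α => ∑ u ∈ S, x (w u)) w = x (w i) - x (w j) := by
  have hrest : ∑ u ∈ S.erase i, x ((w * swap i j) u) = ∑ u ∈ S.erase i, x (w u) :=
    sum_congr rfl fun u hu => by
      rw [Perm.mul_apply, swap_apply_of_ne_of_ne (ne_of_mem_erase hu)
        (ne_of_mem_of_not_mem (mem_of_mem_erase hu) hj)]
  rw [rightDiff, ← add_sum_erase S _ hi, ← add_sum_erase S _ hi, hrest, add_sub_add_right_eq_sub,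
    Perm.mul_apply, swap_apply_left]

end SumOver

section BlockFamily

variable {n : ℕ} {R : Type*} [CommRing R] {Γ : SimpleGraph (Fin n)} {B : Set (Fin n)}
  {i j p u v : Fin n}

open Classical in
/-- The coefficient families `b p w = ∑ u, x (w u)`, where `u` ranges over the branch of the block
`B` at `p`, and `b p = 0` for `p` outside `B`. -/
noncomputable def blockFamily (R : Type*) [CommRing R] (Γ : SimpleGraph (Fin n))
    (B : Set (Fin n)) : (Fin n → R) →ₗ[R] (Fin n → Perm (Fin n) → R) :=
  LinearMap.pi fun p => LinearMap.pi fun w =>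
    ∑ u with p ∈ B ∧ InBranch Γ B p u, LinearMap.proj (w u)

open Classical in
lemma blockFamily_apply (x : Fin n → R) (p : Fin n) :
    blockFamily R Γ B x p = fun w => ∑ u with p ∈ B ∧ InBranch Γ B p u, x (w u) := by
  funext w
  simp only [blockFamily, LinearMap.pi_apply, LinearMap.sum_apply, LinearMap.proj_apply]

lemma swap_mem_rightPeriods_blockFamily (h : p ∈ B → (InBranch Γ B p i ↔ InBranch Γ B p j))
    (x : Fin n → R) : swap i j ∈ rightPeriods (blockFamily R Γ B x p) := by
  classical
  rw [blockFamily_apply]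
  exact swap_mem_rightPeriods_sum
    (by simpa only [mem_filter, mem_univ, true_and] using and_congr_right h) x

lemma rightDiff_blockFamily (hi : i ∈ B) (hj : j ∈ B) (hij : i ≠ j) (x : Fin n → R)
    (w : Perm (Fin n)) :
    rightDiff (swap i j) (blockFamily R Γ B x i) w = x (w i) - x (w j) := by
  classical
  rw [blockFamily_apply]
  exact rightDiff_swap_sum (by simp [hi, inBranch_self])
    (by simp [inBranch_iff_eq_of_mem hj, hij.symm]) x w

lemma blockFamily_mem_coeffSpace (hΓ : Γ.Connected) (hB : IsInsepClass Γ B) (x : Fin n → R) :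
    blockFamily R Γ B x ∈ coeffSpace R Γ := by
  intro i j hij
  by_cases hB' : i ∈ B ∧ j ∈ B
  · obtain ⟨hi, hj⟩ := hB'
    refine ⟨fun p hpi hpj => swap_mem_rightPeriods_blockFamily (fun _ => ?_) x,
      rightDiff_eq_zero_iff.1 ?_⟩
    · rw [inBranch_iff_eq_of_mem hi, inBranch_iff_eq_of_mem hj]
      exact iff_of_false hpi.symm hpj.symm
    · funext w
      have hji := rightDiff_blockFamily (Γ := Γ) hj hi hij.ne.symm x w
      rw [swap_comm] at hji
      rw [rightDiff_add, Pi.add_apply, rightDiff_blockFamily hi hj hij.ne, hji,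
        sub_add_sub_cancel, sub_self, Pi.zero_apply]
  · have hper := fun p => swap_mem_rightPeriods_blockFamily
      (hB.inBranch_iff_of_adj hΓ hij hB' (p := p)) x
    exact ⟨fun p _ _ => hper p, fun w => congrArg₂ (· + ·) (hper i w) (hper j w)⟩

theorem isJumpModel_blockFamily [Nontrivial (Fin n)] (hΓ : Γ.Connected) (hB : IsInsepClass Γ B)
    (hcard : 2 < B.ncard) : IsJumpModel Γ B (blockFamily R Γ B) where
  mem_coeffSpace := blockFamily_mem_coeffSpace hΓ hB
  rightDiff_eq_zero x i j hij hne := rightDiff_eq_zero_iff.2 <|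
    swap_mem_rightPeriods_blockFamily (hB.inBranch_iff_of_adj hΓ hij hne) x
  exists_jumps_eq b hb := by
    obtain ⟨x, hx⟩ := exists_block_potential hΓ hB hb hcard
    refine ⟨x, jumps_eq_iff.2 fun i hi j hj hij => ?_⟩
    funext w
    rw [rightDiff_blockFamily hi hj hij.ne, hx i hi j hj]
  jumps_apply_eq_zero_iff x := by
    rw [jumps_eq_zero_iff]
    constructor
    · intro hzero a a'
      obtain ⟨i, hi, j, hj, hij⟩ := hB.exists_adj hΓ
      rcases eq_or_ne a a' with rfl | haa'
      · rfl
      obtain ⟨w, -, rfl, rfl⟩ := exists_smul_eq_and_apply_eq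
        (mem_ofSingleton.2 rfl) (mt mem_ofSingleton.1 hij.ne.symm)
        (mem_ofSingleton.2 rfl) (mt mem_ofSingleton.1 haa'.symm)
      rw [← sub_eq_zero, ← rightDiff_blockFamily (Γ := Γ) hi hj hij.ne, hzero i hi j hj hij,
        Pi.zero_apply]
    · intro hconst i hi j hj hij
      funext w
      rw [rightDiff_blockFamily hi hj hij.ne, hconst (w i) (w j), sub_self, Pi.zero_apply]

end BlockFamily

section Dimension

variable {n : ℕ} {R K : Type*} [CommRing R] [Field K] {Γ : SimpleGraph (Fin n)}
  {B : Set (Fin n)} {i j : Fin n}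

lemma IsJumpModel.exists_isolated_jumps {T : Type*}
    {θ : (T → R) →ₗ[R] (Fin n → Perm (Fin n) → R)} (hθ : IsJumpModel Γ B θ)
    (hB : IsInsepClass Γ B) {b : Fin n → Perm (Fin n) → R} (hb : b ∈ coeffSpace R Γ) :
    ∃ b' ∈ coeffSpace R Γ, jumps R Γ B b' = jumps R Γ B b ∧
      ∀ B', IsInsepClass Γ B' → B' ≠ B → jumps R Γ B' b' = 0 := by
  obtain ⟨x, hx⟩ := hθ.exists_jumps_eq b hb
  refine ⟨θ x, hθ.mem_coeffSpace x, hx, fun B' hB' hne => jumps_eq_zero_iff.2 ?_⟩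
  exact fun u hu v hv huv => hθ.rightDiff_eq_zero x u v huv fun h =>
    hne (hB'.eq_of_mem hB huv.ne hu hv h.1 h.2)

lemma exists_powersetCard_coe_eq (S : Set (Fin n)) :
    ∃ L : Set.powersetCard (Fin n) S.ncard, (L : Set (Fin n)) = S := by
  classical exact ⟨⟨S.toFinset, (Set.ncard_eq_toFinset_card' S).symm⟩, S.coe_toFinset⟩

lemma IsInsepClass.exists_isJumpModel [Nontrivial (Fin n)] (hΓ : Γ.Connected)
    (hB : IsInsepClass Γ B) :
    ∃ (T : Type) (θ : (T → R) →ₗ[R] (Fin n → Perm (Fin n) → R)), IsJumpModel Γ B θ := by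
  obtain hcard | hcard := (hB.two_le_ncard hΓ).eq_or_lt
  · obtain ⟨i, j, hij, rfl⟩ := Set.ncard_eq_two.1 hcard.symm
    obtain ⟨L, hL⟩ := exists_powersetCard_coe_eq (cutSide Γ i j)
    exact ⟨_, _, isJumpModel_cutFamily hΓ ((isCutEdge_iff_isInsepClass hΓ hij).2 hB) hL⟩
  · exact ⟨_, _, isJumpModel_blockFamily hΓ hB hcard⟩

/-- The coefficient families `b` for which each `b p` is constant. -/
def constFamilies (R : Type*) [CommRing R] (n : ℕ) : Submodule R (Fin n → Perm (Fin n) → R) :=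
  LinearMap.range (LinearMap.pi fun p => LinearMap.pi fun _ => LinearMap.proj p :
    (Fin n → R) →ₗ[R] (Fin n → Perm (Fin n) → R))

lemma finrank_constFamilies [Nontrivial R] : Module.finrank R (constFamilies R n) = n := by
  rw [constFamilies, LinearMap.finrank_range_of_inj fun x y hxy => _root_.funext fun p =>
    congrFun (congrFun hxy p) 1, Module.finrank_fin_fun]

lemma mem_constFamilies_iff (hΓ : Γ.Connected) {b : Fin n → Perm (Fin n) → R} :
    b ∈ constFamilies R n ↔ b ∈ coeffSpace R Γ ∧ ∀ B : blocks Γ, jumps R Γ B b = 0 := by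
  constructor
  · rintro ⟨c, rfl⟩
    exact ⟨fun i j _ => ⟨fun _ _ _ _ => rfl, fun _ => rfl⟩,
      fun B => jumps_eq_zero_iff.2 fun i _ j _ _ => rightDiff_eq_zero_iff.2 fun _ => rfl⟩
  · rintro ⟨hb, hjumps⟩
    have hzero : ∀ i j, Γ.Adj i j → rightDiff (swap i j) (b i) = 0 := fun i j hij => by
      obtain ⟨B, hB, hi, hj⟩ := exists_isInsepClass_of_adj hij
      exact jumps_eq_zero_iff.1 (hjumps ⟨B, mem_blocks.2 hB⟩) i hi j hj hij
    exact ⟨fun p => b p 1, funext fun p => funext fun w =>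
      apply_eq_apply_of_rightDiff_eq_zero hΓ hb hzero p 1 w⟩

theorem finrank_coeffSpace_eq_add_sum_blocks [Nontrivial (Fin n)] (hΓ : Γ.Connected) :
    Module.finrank K (coeffSpace K Γ) =
      n + ∑ B ∈ blocks Γ, Module.finrank K ((coeffSpace K Γ).map (jumps K Γ B)) := by
  rw [finrank_eq_add_sum_finrank_map (fun B : blocks Γ => jumps K Γ B)
    (fun b => mem_constFamilies_iff hΓ), finrank_constFamilies,
    Finset.sum_coe_sort (blocks Γ) fun B =>
      Module.finrank K ((coeffSpace K Γ).map (jumps K Γ B))]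
  intro B b hb
  have hB := mem_blocks.1 B.2
  obtain ⟨T, θ, hθ⟩ := hB.exists_isJumpModel (R := K) hΓ
  obtain ⟨b', hb', heq, hoff⟩ := hθ.exists_isolated_jumps hB hb
  exact ⟨b', hb', heq, fun B' hne => hoff B' (mem_blocks.1 B'.2) (Subtype.coe_ne_coe.2 hne)⟩

lemma finrank_map_jumps_of_isCutEdge (hΓ : Γ.Connected) (hc : IsCutEdge Γ i j) :
    Module.finrank K ((coeffSpace K Γ).map (jumps K Γ {i, j})) + 1 =
      n.choose (cutSide Γ i j).ncard := by
  obtain ⟨L, hL⟩ := exists_powersetCard_coe_eq (cutSide Γ i j)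
  have : Nonempty (Set.powersetCard (Fin n) (cutSide Γ i j).ncard) := ⟨L⟩
  rw [(isJumpModel_cutFamily hΓ hc hL).finrank_map_jumps_add_one, ← Nat.card_eq_fintype_card,
    Set.powersetCard.card, Nat.card_fin]

lemma finrank_map_jumps_of_two_lt [Nontrivial (Fin n)] (hΓ : Γ.Connected)
    (hB : IsInsepClass Γ B) (hcard : 2 < B.ncard) :
    Module.finrank K ((coeffSpace K Γ).map (jumps K Γ B)) + 1 = n := by
  rw [(isJumpModel_blockFamily hΓ hB hcard).finrank_map_jumps_add_one, Fintype.card_fin]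

theorem finrank_coeffSpace_add_card_blocks [Nontrivial (Fin n)] (hΓ : Γ.Connected) :
    Module.finrank K (coeffSpace K Γ) + #(blocks Γ) =
      n + ∑ s ∈ cutEdges Γ, n.choose (cutSide Γ s.1 s.2).ncard + n * #(bigBlocks Γ) := by
  have hcut : ∀ s ∈ cutEdges Γ, Module.finrank K ((coeffSpace K Γ).map (jumps K Γ {s.1, s.2})) + 1 =
      n.choose (cutSide Γ s.1 s.2).ncard := fun s hs =>
    finrank_map_jumps_of_isCutEdge hΓ (mem_cutEdges.1 hs).2
  have hbig : ∀ B ∈ bigBlocks Γ, Module.finrank K ((coeffSpace K Γ).map (jumps K Γ B)) + 1 = n :=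
    fun B hB => finrank_map_jumps_of_two_lt hΓ (mem_bigBlocks.1 hB).1 (mem_bigBlocks.1 hB).2
  rw [finrank_coeffSpace_eq_add_sum_blocks hΓ, add_assoc, card_eq_sum_ones, ← sum_add_distrib,
    sum_blocks hΓ, sum_congr rfl hcut, sum_congr rfl hbig, sum_const, smul_eq_mul, mul_comm n,
    add_assoc]

end Dimension

end LinSpline

/-- For a connected graph `Γ` on `[n]` with `n ≥ 3`, the `ℂ`-dimension of the space of
linear splines `Splines(Γ)¹` equals the combinatorial invariant `D_Γ`. -/
theorem finrank_linSplines_eq_Dinv {n : ℕ} (hn : 3 ≤ n)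
    (Γ : SimpleGraph (Fin n)) (hΓ : Γ.Connected) :
    (Module.finrank ℂ ↥(linSplines Γ) : ℤ) = Dinv Γ := by
  have : Nontrivial (Fin n) := Fin.nontrivial_iff_two_le.2 (by omega)
  have hcoeff : (Module.finrank ℂ (LinSpline.coeffSpace ℂ Γ) : ℤ) + (LinSpline.blocks Γ).card =
      Dinv Γ + (LinSpline.blocks Γ).card := by
    rw [LinSpline.Dinv_add_card_blocks hn hΓ]
    exact_mod_cast LinSpline.finrank_coeffSpace_add_card_blocks hΓ
  rw [LinSpline.finrank_linSplines]
  exact add_right_cancel hcoeff
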